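/- arXiv:2312.13815 — 4 statements merged into one kernel-verified Lean document; each statement's English description precedes it below -/
import Mathlib

section
/- Let λ = (λ₁,…,λ_n) be an n-tuple of integers such that the numbers ℓ_i = λ_i + n − i are pairwise distinct. Then for every integer m ≥ 1, the quantum Gelfand invariant tr_q M^m acts in the module L_q(λ) as multiplication by the scalar ∑_{k=1}^n q^{2ℓ_k m} · (∏_{j=1}^n [ℓ_j − ℓ_k + 1]_q) / (∏_{j≠k} [ℓ_j − ℓ_k]_q); that is, (tr_q M^m)·v equals this scalar times v for every v ∈ L_q(λ). The same formula also holds for m = 0. -/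
open Matrix

noncomputable section

/-- The `R`-matrix of `U_q(gl_n)` as an `n²×n²` matrix. -/
def Rmat (q : ℂ) (n : ℕ) : Matrix (Fin n × Fin n) (Fin n × Fin n) ℂ :=
  fun p r =>
    (if p = r then (if p.1 = p.2 then q else 1) else 0) +
      (if r.1 = p.2 ∧ r.2 = p.1 ∧ p.1 < p.2 then q - q⁻¹ else 0)

/-- Generators of `U_q(gl_n)`: a sign (`true` for `+`) and a pair of indices. -/
abbrev GenGL (n : ℕ) := Bool × Fin n × Fin n

/-- The generator `l^±_{ij}` in the free algebra. -/
def gl (n : ℕ) (p : Bool) (i j : Fin n) : FreeAlgebra ℂ (GenGL n) :=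
  FreeAlgebra.ι ℂ (p, i, j)

/-- Embedding of an `n×n` matrix into the first tensor leg of `End(ℂ^n)⊗End(ℂ^n)`. -/
def leg1 {n : ℕ} {A : Type*} [Semiring A] (m : Fin n → Fin n → A) :
    Matrix (Fin n × Fin n) (Fin n × Fin n) A :=
  fun v w => if v.2 = w.2 then m v.1 w.1 else 0

/-- Embedding of an `n×n` matrix into the second tensor leg of `End(ℂ^n)⊗End(ℂ^n)`. -/
def leg2 {n : ℕ} {A : Type*} [Semiring A] (m : Fin n → Fin n → A) :
    Matrix (Fin n × Fin n) (Fin n × Fin n) A :=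
  fun v w => if v.1 = w.1 then m v.2 w.2 else 0

/-- The `R`-matrix with entries in the free algebra. -/
def RcGL (q : ℂ) (n : ℕ) : Matrix (Fin n × Fin n) (Fin n × Fin n) (FreeAlgebra ℂ (GenGL n)) :=
  (Rmat q n).map (algebraMap ℂ (FreeAlgebra ℂ (GenGL n)))

/-- The defining relations of `U_q(gl_n)` in its `RTT` presentation. -/
inductive relGL (q : ℂ) (n : ℕ) :
    FreeAlgebra ℂ (GenGL n) → FreeAlgebra ℂ (GenGL n) → Prop
  | tri_minus {i j : Fin n} : i < j → relGL q n (gl n false i j) 0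
  | tri_plus {i j : Fin n} : i < j → relGL q n (gl n true j i) 0
  | diag_mp (i : Fin n) : relGL q n (gl n false i i * gl n true i i) 1
  | diag_pm (i : Fin n) : relGL q n (gl n true i i * gl n false i i) 1
  | rll (p : Bool) (v w : Fin n × Fin n) :
      relGL q n
        ((RcGL q n * leg1 (gl n p) * leg2 (gl n p)) v w)
        ((leg2 (gl n p) * leg1 (gl n p) * RcGL q n) v w)
  | rll_pm (v w : Fin n × Fin n) :
      relGL q n
        ((RcGL q n * leg1 (gl n true) * leg2 (gl n false)) v w)
        ((leg2 (gl n false) * leg1 (gl n true) * RcGL q n) v w)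

/-- The quantized enveloping algebra `U_q(gl_n)` in its `RTT` presentation. -/
abbrev UqGL (q : ℂ) (n : ℕ) := RingQuot (relGL q n)

/-- The generator `l^±_{ij}` of `U_q(gl_n)`. -/
def lG (q : ℂ) (n : ℕ) (p : Bool) (i j : Fin n) : UqGL q n :=
  RingQuot.mkAlgHom ℂ (relGL q n) (gl n p i j)

/-- The generator matrix `L^± = [l^±_{ij}]`. -/
def LM (q : ℂ) (n : ℕ) (p : Bool) : Matrix (Fin n) (Fin n) (UqGL q n) :=
  fun i j => lG q n p i j

/-- The diagonal matrix `D = diag(q^{n−1}, q^{n−3}, …, q^{−n+1})` over `A`. -/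
def Dmat (q : ℂ) (n : ℕ) (A : Type*) [Ring A] [Algebra ℂ A] : Matrix (Fin n) (Fin n) A :=
  Matrix.diagonal fun i => algebraMap ℂ A (q ^ ((n : ℤ) - 1 - 2 * (i : ℤ)))

/-- The inverse diagonal matrix `D⁻¹`. -/
def Dmatinv (q : ℂ) (n : ℕ) (A : Type*) [Ring A] [Algebra ℂ A] : Matrix (Fin n) (Fin n) A :=
  Matrix.diagonal fun i => algebraMap ℂ A (q ^ (-((n : ℤ) - 1 - 2 * (i : ℤ))))

/-- Quantum trace `tr_q X = tr(D X)`. -/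
def trq {n : ℕ} {A : Type*} [Ring A] [Algebra ℂ A] (q : ℂ) (X : Matrix (Fin n) (Fin n) A) : A :=
  Matrix.trace (Dmat q n A * X)

/-- The `q`-number `[k]_q`. -/
def qint (q : ℂ) (k : ℤ) : ℂ := (q ^ k - q ^ (-k)) / (q - q⁻¹)

end

/-!
The defining relations say that `M = L⁻(L⁺)⁻¹`, hence every power `M ^ m`, satisfies
`M₁ R⁻¹ L⁻₂ = R⁻¹ L⁻₂ M₁`. Conjugating `M₁ ^ m` by `R` does not change its quantum trace over the
first leg, so `tr_q M ^ m` commutes with the entries of `L⁻`, and by the symmetry reversing the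
indices also with those of `L⁺`. Being central, it acts on a cyclic module by the scalar by which it
acts on the generator `ξ`.

On `ξ` the same relation, applied to `M ^ (m + 1) = M ^ m L⁻ (L⁺)⁻¹`, gives a recursion in `m` for
the eigenvalues of the diagonal entries of `M ^ m`. Their weighted sums over the last indices obey
the recursion of the one-row Hall–Littlewood sums in `z_k = q ^ (2 ℓ_k)` with parameter `t = q²`,
started at `m = 0` by Lagrange interpolation, and the full sum is the stated formula up to a power
of `q`.
-/

open Finset

section UpperSet

variable {ι : Type*} [LinearOrder ι] [LocallyFiniteOrderTop ι]

theorem induction_on_isUpperSet {motive : ∀ S : Finset ι, IsUpperSet (S : Set ι) → Prop}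
    (empty : motive ∅ (by simpa using isUpperSet_empty))
    (Ici : ∀ a, motive (Ioi a) (by simpa using isUpperSet_Ioi a) →
      motive (Ici a) (by simpa using isUpperSet_Ici a))
    (S : Finset ι) (hS : IsUpperSet (S : Set ι)) : motive S hS := by
  induction S using Finset.induction_on_min with
  | empty => exact empty
  | insert a T hlt ih =>
    obtain rfl : T = Ioi a := by
      ext x
      rw [mem_Ioi]
      refine ⟨hlt x, fun hax => ?_⟩
      have hx : x ∈ insert a T := by simpa using hS hax.le (by simp)
      exact (mem_insert.1 hx).resolve_left hax.ne'
    simpa only [Ioi_insert] using Ici a (ih (by simpa using isUpperSet_Ioi a))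

-- Each relation reads `∑_{y ≤ k} W y = t ∑_{y < k} W y - (t - 1) B k`.
theorem sum_eq_of_recurrence [Fintype ι] [LocallyFiniteOrderBot ι] {K V : Type*} [CommRing K]
    [AddCommGroup V] [Module K V] (t : K) (W B : ι → V) {T : Finset ι}
    (hT : IsUpperSet (T : Set ι))
    (hW : ∀ k ∈ T, W k = (t - 1) • (∑ y ∈ Iio k, W y - B k)) :
    ∑ k, W k =
      t ^ #T • ∑ k ∈ Tᶜ, W k - (t - 1) • ∑ k ∈ T, t ^ #(Ioi k) • B k := by
  induction T, hT using induction_on_isUpperSet with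
  | empty => simp
  | Ici a ih =>
    have compl_Ici : (Ici a)ᶜ = Iio a := by ext; simp
    have compl_Ioi : (Ioi a)ᶜ = insert a (Iio a) := by rw [Iio_insert]; ext; simp
    rw [ih fun k hk => hW k (Ioi_subset_Ici_self hk), compl_Ici, compl_Ioi,
      sum_insert notMem_Iio_self, hW a (by simp), ← Ioi_insert, sum_insert notMem_Ioi_self,
      card_insert_of_notMem notMem_Ioi_self, pow_succ]
    module

end UpperSet

section HallLittlewood

variable {ι K : Type*} [Field K]

/-- The one-row Hall–Littlewood sum `∑_{k ∈ S} z_k^m ∏_{j ∈ S, j ≠ k} (z_k - t z_j) / (z_k - z_j)`.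
For `m ≥ 1` it is, up to the factor `1 - t`, the Hall–Littlewood function `q_m` in the variables
`z_k`, `k ∈ S`. -/
noncomputable def hallLittlewoodSum [DecidableEq ι] (t : K) (z : ι → K) (S : Finset ι) (m : ℕ) :
    K :=
  ∑ k ∈ S, z k ^ m * ∏ j ∈ S.erase k, (z k - t * z j) / (z k - z j)

theorem hallLittlewoodSum_insert [DecidableEq ι] (t : K) (z : ι → K) {S : Finset ι} {i : ι}
    (hi : i ∉ S) (m : ℕ) :
    hallLittlewoodSum t z (insert i S) m =
      z i ^ m * ∏ j ∈ S, (z i - t * z j) / (z i - z j) +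
        ∑ k ∈ S, z k ^ m * ((z k - t * z i) / (z k - z i) *
          ∏ j ∈ S.erase k, (z k - t * z j) / (z k - z j)) := by
  rw [hallLittlewoodSum, sum_insert hi, erase_insert hi]
  congr 1
  refine sum_congr rfl fun k hk => ?_
  have hik : i ≠ k := by rintro rfl; exact hi hk
  rw [erase_insert_of_ne hik, prod_insert (by simp [hi])]

theorem hallLittlewoodSum_insert_succ [DecidableEq ι] (t : K) {z : ι → K}
    (hz : Function.Injective z) {S : Finset ι} {i : ι} (hi : i ∉ S) (m : ℕ) :
    hallLittlewoodSum t z (insert i S) (m + 1) =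
      hallLittlewoodSum t z S (m + 1) +
        z i * (hallLittlewoodSum t z (insert i S) m - t * hallLittlewoodSum t z S m) := by
  rw [hallLittlewoodSum_insert t z hi, hallLittlewoodSum_insert t z hi, hallLittlewoodSum,
    hallLittlewoodSum, add_sub_assoc, mul_add, ← mul_assoc, ← pow_succ', add_left_comm, mul_sum,
    ← sum_sub_distrib, mul_sum, ← sum_add_distrib]
  congr 1
  refine sum_congr rfl fun k hk => ?_
  have hki : z k - z i ≠ 0 := sub_ne_zero.2 fun h => hi (hz h ▸ hk)
  field_simp
  ring

-- Lagrange interpolation of `∏_{j ∈ S} (X - t z_j)` at the nodes `z_j`, `j ∈ insert i S`.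
theorem hallLittlewoodSum_insert_zero [DecidableEq ι] (t : K) {z : ι → K}
    (hz : Function.Injective z) {S : Finset ι} {i : ι} (hi : i ∉ S) :
    hallLittlewoodSum t z (insert i S) 0 = 1 + t * hallLittlewoodSum t z S 0 := by
  have lagrange := Lagrange.leadingCoeff_eq_sum (s := insert i S) (v := z) hz.injOn
    (P := Lagrange.nodal S fun j => t * z j)
    (by rw [Lagrange.degree_nodal, card_insert_of_notMem hi]; norm_cast)
  rw [Lagrange.nodal_monic.leadingCoeff, sum_insert hi, erase_insert hi, Lagrange.eval_nodal,
    ← prod_div_distrib] at lagrange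
  rw [hallLittlewoodSum_insert t z hi, lagrange, hallLittlewoodSum, mul_sum, pow_zero, one_mul,
    add_assoc, ← sum_add_distrib]
  congr 1
  refine sum_congr rfl fun k hk => ?_
  have hki : z k - z i ≠ 0 := sub_ne_zero.2 fun h => hi (hz h ▸ hk)
  have hik : i ≠ k := by rintro rfl; exact hi hk
  rw [erase_insert_of_ne hik, prod_insert (by simp [hi]), Lagrange.eval_nodal,
    ← mul_prod_erase S _ hk, mul_div_mul_comm, ← prod_div_distrib]
  field_simp
  ring

theorem hallLittlewoodSum_zero [DecidableEq ι] (t : K) {z : ι → K} (hz : Function.Injective z)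
    (S : Finset ι) : hallLittlewoodSum t z S 0 = ∑ i ∈ range #S, t ^ i := by
  induction S using Finset.induction_on with
  | empty => simp [hallLittlewoodSum]
  | insert i S hi ih =>
    rw [hallLittlewoodSum_insert_zero t hz hi, ih, card_insert_of_notMem hi, geom_sum_succ,
      add_comm]

variable [LinearOrder ι] [LocallyFiniteOrderTop ι]

/-- The scalars by which the diagonal entries of the `m`-th power of the generating matrix act on a
highest weight vector, as functions of `t = q²` and of the squares `ν` of its weights; see
`IsHighestWeightVector.pow`. -/
def diagEigenvalue (t : K) (ν : ι → K) : ℕ → ι → K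
  | 0, _ => 1
  | m + 1, i => ν i * (t ^ #(Ioi i) * diagEigenvalue t ν m i -
      (t - 1) * ∑ k ∈ Ioi i, t ^ #(Ioi k) * diagEigenvalue t ν m k)

theorem sum_diagEigenvalue (t : K) (ν : ι → K)
    (hz : Function.Injective fun i => t ^ #(Ioi i) * ν i) (m : ℕ) {S : Finset ι}
    (hS : IsUpperSet (S : Set ι)) :
    ∑ k ∈ S, t ^ #(Ioi k) * diagEigenvalue t ν m k =
      hallLittlewoodSum t (fun i => t ^ #(Ioi i) * ν i) S m := by
  induction m generalizing S with
  | zero =>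
    rw [hallLittlewoodSum_zero t hz]
    induction S, hS using induction_on_isUpperSet with
    | empty => simp
    | Ici a ih =>
      rw [← Ioi_insert, sum_insert notMem_Ioi_self, ih, card_insert_of_notMem notMem_Ioi_self,
        geom_sum_succ', diagEigenvalue, mul_one]
  | succ m ihm =>
    induction S, hS using induction_on_isUpperSet with
    | empty => simp [hallLittlewoodSum]
    | Ici a ih =>
      have hIoi := ihm (S := Ioi a) (by simpa using isUpperSet_Ioi a)
      have hIci := ihm (S := Ici a) (by simpa using isUpperSet_Ici a)
      rw [← Ioi_insert] at hIci ⊢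
      rw [hallLittlewoodSum_insert_succ t hz notMem_Ioi_self, ← hIci, ← hIoi, ← ih,
        sum_insert notMem_Ioi_self, sum_insert notMem_Ioi_self, diagEigenvalue]
      ring

end HallLittlewood

section QInt

theorem injective_zpow_of_pow_ne_one {K : Type*} [DivisionRing K] {q : K} (hq0 : q ≠ 0)
    (hq : ∀ k : ℕ, k ≠ 0 → q ^ k ≠ 1) : Function.Injective fun k : ℤ => q ^ k := by
  have hfin : ¬IsOfFinOrder (Units.mk0 q hq0) := by
    rw [isOfFinOrder_iff_pow_eq_one]
    rintro ⟨k, hk, h⟩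
    exact hq k hk.ne' (by simpa using congrArg Units.val h)
  intro a b h
  exact injective_zpow_iff_not_isOfFinOrder.2 hfin (Units.ext (by simpa using h))

variable {q : ℂ}

theorem sub_inv_ne_zero_of_sq_ne_one (hq0 : q ≠ 0) (hq2 : q ^ 2 ≠ 1) : q - q⁻¹ ≠ 0 := by
  intro h
  refine hq2 ?_
  rw [sq]
  nth_rw 2 [sub_eq_zero.1 h]
  exact mul_inv_cancel₀ hq0

theorem qint_one (hq0 : q ≠ 0) (hq2 : q ^ 2 ≠ 1) : qint q 1 = 1 := by
  rw [qint, zpow_one, _root_.zpow_neg_one, div_self (sub_inv_ne_zero_of_sq_ne_one hq0 hq2)]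

theorem qint_sub (hq0 : q ≠ 0) (a b : ℤ) :
    qint q (a - b) = (q ^ (2 * a) - q ^ (2 * b)) / (q ^ (a + b) * (q - q⁻¹)) := by
  have := zpow_ne_zero (a + b) hq0
  rw [qint, ← div_div]
  congr 1
  rw [eq_div_iff this, sub_mul, ← zpow_add₀ hq0, ← zpow_add₀ hq0]
  ring_nf

theorem qint_add_one_div_qint (hq0 : q ≠ 0) (hq2 : q ^ 2 ≠ 1) (a b : ℤ) :
    qint q (b - a + 1) / qint q (b - a) =
      q⁻¹ * ((q ^ (2 * a) - q ^ 2 * q ^ (2 * b)) / (q ^ (2 * a) - q ^ (2 * b))) := by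
  have hqq := sub_inv_ne_zero_of_sq_ne_one hq0 hq2
  have hab := zpow_ne_zero (b + a) hq0
  have hnum : q ^ (2 * (b + 1)) = q ^ 2 * q ^ (2 * b) := by
    rw [← zpow_natCast, ← zpow_add₀ hq0]
    ring_nf
  rw [show b - a + 1 = b + 1 - a by ring, qint_sub hq0, qint_sub hq0, hnum, add_right_comm,
    zpow_add_one₀ hq0, mul_right_comm, ← div_div, div_right_comm,
    div_div_div_cancel_right₀ (mul_ne_zero hab hqq), div_eq_inv_mul _ q, ← neg_div_neg_eq, neg_sub,
    neg_sub]

theorem sum_qint_eq_hallLittlewoodSum {ι : Type*} [Fintype ι] [DecidableEq ι] (hq0 : q ≠ 0)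
    (hq2 : q ^ 2 ≠ 1) (ell : ι → ℤ) (m : ℕ) :
    ∑ k, q ^ (2 * ell k * (m : ℤ)) * ((∏ j, qint q (ell j - ell k + 1)) /
        ∏ j ∈ univ.erase k, qint q (ell j - ell k)) =
      q ^ (1 - (Fintype.card ι : ℤ)) *
        hallLittlewoodSum (q ^ 2) (fun i => q ^ (2 * ell i)) univ m := by
  rw [hallLittlewoodSum, mul_sum]
  refine sum_congr rfl fun k _ => ?_
  have hcard : q ^ (1 - (Fintype.card ι : ℤ)) = q⁻¹ ^ #(univ.erase k) := by
    have : 0 < Fintype.card ι := Fintype.card_pos_iff.2 ⟨k⟩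
    rw [card_erase_of_mem (mem_univ k), card_univ, inv_pow, ← zpow_natCast, ← _root_.zpow_neg]
    congr 1
    omega
  rw [← mul_prod_erase univ _ (mem_univ k), sub_self, zero_add, qint_one hq0 hq2, one_mul,
    ← prod_div_distrib, prod_congr rfl fun j _ => qint_add_one_div_qint hq0 hq2 (ell k) (ell j),
    prod_mul_distrib, prod_const, hcard, _root_.zpow_mul, zpow_natCast, mul_left_comm]

end QInt

section Legs

variable {n : ℕ} {A : Type*}

/-- The embedding `leg1` of matrices into the first tensor leg, as a monoid homomorphism. -/
def leg1Hom (n : ℕ) (A : Type*) [Semiring A] :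
    Matrix (Fin n) (Fin n) A →* Matrix (Fin n × Fin n) (Fin n × Fin n) A where
  toFun X := leg1 X
  map_one' := Matrix.blockDiagonal_one
  map_mul' X Y := Matrix.blockDiagonal_mul (fun _ => X) fun _ => Y

variable [Semiring A]

theorem mul_leg2_apply (X : Matrix (Fin n × Fin n) (Fin n × Fin n) A)
    (L : Matrix (Fin n) (Fin n) A) (v : Fin n × Fin n) (c d : Fin n) :
    (X * leg2 L) v (c, d) = ∑ y, X v (c, y) * L y d := by
  simp only [leg2, Matrix.mul_apply, Fintype.sum_prod_type, mul_ite, mul_zero]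
  rw [sum_comm]
  simp

theorem leg2_mul_leg1_apply (L Y : Matrix (Fin n) (Fin n) A) (a b c d : Fin n) :
    (leg2 L * leg1 Y) (a, b) (c, d) = L b d * Y a c := by
  simp [leg2, leg1, Matrix.mul_apply, Fintype.sum_prod_type]

/-- The involution `(i, j) ↦ (n + 1 - j, n + 1 - i)` of the indices of the tensor square: it
preserves the `R`-matrix and exchanges the tensor legs. -/
def swapRev (n : ℕ) : Equiv.Perm (Fin n × Fin n) :=
  (Equiv.prodComm _ _).trans (Fin.revPerm.prodCongr Fin.revPerm)

theorem swapRev_apply (a b : Fin n) : swapRev n (a, b) = (b.rev, a.rev) := rfl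

theorem leg1_submatrix_swapRev (X : Matrix (Fin n) (Fin n) A) :
    Matrix.submatrix (leg1 X) (swapRev n) (swapRev n) = leg2 (X.submatrix Fin.rev Fin.rev) := by
  ext ⟨a, b⟩ ⟨c, d⟩
  simp [leg1, leg2, swapRev_apply]

theorem leg2_submatrix_swapRev (X : Matrix (Fin n) (Fin n) A) :
    Matrix.submatrix (leg2 X) (swapRev n) (swapRev n) = leg1 (X.submatrix Fin.rev Fin.rev) := by
  ext ⟨a, b⟩ ⟨c, d⟩
  simp [leg1, leg2, swapRev_apply]

end Legs

section RMatrix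

variable {n : ℕ} {A : Type*} [Ring A] [Algebra ℂ A]

/-- The `R`-matrix with entries in a `ℂ`-algebra `A`. -/
noncomputable def rMatrix (q : ℂ) (n : ℕ) (A : Type*) [Ring A] [Algebra ℂ A] :
    Matrix (Fin n × Fin n) (Fin n × Fin n) A :=
  (Rmat q n).map (algebraMap ℂ A)

theorem rMatrix_mul_apply (q : ℂ) (X : Matrix (Fin n × Fin n) (Fin n × Fin n) A)
    (a b : Fin n) (w : Fin n × Fin n) :
    (rMatrix q n A * X) (a, b) w = (if a = b then q else 1) • X (a, b) w +
      (if a < b then (q - q⁻¹) • X (b, a) w else 0) := by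
  have term : ∀ r : Fin n × Fin n, rMatrix q n A (a, b) r * X r w =
      (if (a, b) = r then (if a = b then q else 1) • X r w else 0) +
      (if (b, a) = r then (if a < b then (q - q⁻¹) • X r w else 0) else 0) := by
    rintro ⟨c, d⟩
    simp only [rMatrix, Rmat, Matrix.map_apply, map_add, add_mul, ← Algebra.smul_def, ite_smul,
      zero_smul]
    congr 1
    by_cases h : a < b <;> simp [h, eq_comm]
  rw [Matrix.mul_apply, sum_congr rfl fun r _ => term r, sum_add_distrib]
  simp

theorem mul_rMatrix_apply (q : ℂ) (X : Matrix (Fin n × Fin n) (Fin n × Fin n) A)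
    (v : Fin n × Fin n) (c d : Fin n) :
    (X * rMatrix q n A) v (c, d) = (if c = d then q else 1) • X v (c, d) +
      (if d < c then (q - q⁻¹) • X v (d, c) else 0) := by
  have term : ∀ r : Fin n × Fin n, X v r * rMatrix q n A r (c, d) =
      (if r = (c, d) then (if c = d then q else 1) • X v r else 0) +
      (if r = (d, c) then (if d < c then (q - q⁻¹) • X v r else 0) else 0) := by
    rintro ⟨a, b⟩
    rw [rMatrix, Matrix.map_apply, ← Algebra.commutes, ← Algebra.smul_def, Rmat, add_smul]
    simp only [ite_smul, zero_smul, Prod.mk.injEq]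
    congr 1 <;> grind
  rw [Matrix.mul_apply, sum_congr rfl fun r _ => term r, sum_add_distrib]
  simp

theorem rMatrix_mul_rMatrix_inv {q : ℂ} (hq0 : q ≠ 0) : rMatrix q n A * rMatrix q⁻¹ n A = 1 := by
  suffices ∀ X : Matrix (Fin n × Fin n) (Fin n × Fin n) A,
      rMatrix q n A * (rMatrix q⁻¹ n A * X) = X by simpa using this 1
  intro X
  ext ⟨a, b⟩ w
  rw [rMatrix_mul_apply, rMatrix_mul_apply, rMatrix_mul_apply, inv_inv]
  rcases lt_trichotomy a b with h | rfl | h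
  · simp only [h.ne, h.ne', h, h.not_gt, if_true, if_false]
    module
  · simp [hq0]
  · simp [h.ne', h.not_gt]

/-- The `R`-matrix as a unit, with inverse obtained by `q ↦ q⁻¹`. -/
noncomputable def rMatrixUnit {q : ℂ} (hq0 : q ≠ 0) (n : ℕ) (A : Type*) [Ring A] [Algebra ℂ A] :
    (Matrix (Fin n × Fin n) (Fin n × Fin n) A)ˣ where
  val := rMatrix q n A
  inv := rMatrix q⁻¹ n A
  val_inv := rMatrix_mul_rMatrix_inv hq0
  inv_val := by simpa using rMatrix_mul_rMatrix_inv (inv_ne_zero hq0)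

theorem rMatrix_submatrix_swapRev (q : ℂ) :
    (rMatrix q n A).submatrix (swapRev n) (swapRev n) = rMatrix q n A := by
  ext ⟨a, b⟩ ⟨c, d⟩
  simp only [rMatrix, Rmat, Matrix.submatrix_apply, Matrix.map_apply, swapRev_apply, Prod.mk.injEq,
    Fin.rev_inj, Fin.rev_lt_rev]
  congr 2 <;> grind

end RMatrix

section PartialTrace

variable {n : ℕ} {A : Type*} [Ring A] [Algebra ℂ A]

theorem trq_eq_sum (q : ℂ) (Y : Matrix (Fin n) (Fin n) A) :
    trq q Y = ∑ i : Fin n, q ^ ((n : ℤ) - 1 - 2 * (i : ℤ)) • Y i i := by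
  simp [trq, Dmat, Matrix.trace, Algebra.smul_def]

theorem trq_inv_submatrix_rev (q : ℂ) (Y : Matrix (Fin n) (Fin n) A) :
    trq q⁻¹ (Y.submatrix Fin.rev Fin.rev) = trq q Y := by
  rw [trq_eq_sum, trq_eq_sum, ← Equiv.sum_comp Fin.revPerm]
  refine sum_congr rfl fun i _ => ?_
  rw [_root_.inv_zpow', Fin.revPerm_apply, Matrix.submatrix_apply, Fin.rev_rev, Fin.val_rev]
  congr 2
  omega

/-- The quantum trace over the first tensor leg. -/
noncomputable def partialTrq (q : ℂ) (Z : Matrix (Fin n × Fin n) (Fin n × Fin n) A) :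
    Matrix (Fin n) (Fin n) A :=
  fun b d => ∑ a : Fin n, q ^ ((n : ℤ) - 1 - 2 * (a : ℤ)) • Z (a, b) (a, d)

theorem partialTrq_mul_leg2 (q : ℂ) (Z : Matrix (Fin n × Fin n) (Fin n × Fin n) A)
    (L : Matrix (Fin n) (Fin n) A) : partialTrq q (Z * leg2 L) = partialTrq q Z * L := by
  ext b d
  simp only [Matrix.mul_apply (M := partialTrq q Z), partialTrq, mul_leg2_apply, smul_sum, sum_mul,
    smul_mul_assoc]
  exact sum_comm

theorem partialTrq_leg2_mul_leg1 (q : ℂ) (L Y : Matrix (Fin n) (Fin n) A) (b d : Fin n) :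
    partialTrq q (leg2 L * leg1 Y) b d = L b d * trq q Y := by
  simp only [partialTrq, leg2_mul_leg1_apply, trq_eq_sum, mul_sum, mul_smul_comm]

theorem conj_rMatrix_leg1_apply {q : ℂ} (hq0 : q ≠ 0) (Y : Matrix (Fin n) (Fin n) A)
    (a b d : Fin n) :
    (rMatrix q n A * (leg1 Y * rMatrix q⁻¹ n A)) (a, b) (a, d) =
      (if b = d then Y a a else 0) +
        (if d < b then (q - q⁻¹) * ((if a = d then q⁻¹ else 0) - (if a = b then q else 0) +
          if a ∈ Ioo d b then q⁻¹ - q else 0) else 0) • Y b d := by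
  rw [rMatrix_mul_apply, mul_rMatrix_apply, mul_rMatrix_apply, inv_inv]
  simp only [leg1, mem_Ioo]
  rcases lt_trichotomy d b with hdb | rfl | hbd
  · simp only [hdb, hdb.ne', if_true, if_false, smul_zero, zero_add]
    split_ifs <;> first
      | order
      | tauto
      | subst_vars; match_scalars; field_simp; ring
  · simp only [lt_irrefl, if_true, if_false, zero_smul, add_zero]
    split_ifs <;> first
      | order
      | subst_vars; match_scalars; field_simp
  · simp only [hbd.not_gt, hbd.ne, if_false, smul_zero, zero_smul, zero_add]
    split_ifs <;> first
      | order
      | simp only [smul_zero, add_zero]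

theorem sum_Ioo_zpow_mul {q : ℂ} (hq0 : q ≠ 0) {d b : Fin n} (hdb : d < b) :
    ∑ a ∈ Ioo d b, q ^ ((n : ℤ) - 1 - 2 * (a : ℤ)) * (q⁻¹ - q) =
      q ^ ((n : ℤ) - 2 * (b : ℤ)) - q ^ ((n : ℤ) - 2 - 2 * (d : ℤ)) := by
  let f (a : ℕ) : ℂ := q ^ ((n : ℤ) - 2 * (a : ℤ))
  calc ∑ a ∈ Ioo d b, q ^ ((n : ℤ) - 1 - 2 * (a : ℤ)) * (q⁻¹ - q)
      = ∑ a ∈ Ioo d b, (f (a + 1) - f a) := by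
        refine sum_congr rfl fun a _ => ?_
        rw [mul_sub, ← zpow_add_one₀ hq0, ← zpow_sub_one₀ hq0]
        simp only [f]
        push_cast
        ring_nf
    _ = ∑ a ∈ Ico (d + 1 : ℕ) b, (f (a + 1) - f a) := by
        rw [Ico_add_one_left_eq_Ioo, ← Fin.map_valEmbedding_Ioo, sum_map]
        rfl
    _ = q ^ ((n : ℤ) - 2 * (b : ℤ)) - q ^ ((n : ℤ) - 2 - 2 * (d : ℤ)) := by
        rw [sum_Ico_sub f hdb]
        simp only [f]
        push_cast
        ring_nf

theorem sum_zpow_mul_eq_zero {q : ℂ} (hq0 : q ≠ 0) {d b : Fin n} (hdb : d < b) :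
    ∑ a : Fin n, q ^ ((n : ℤ) - 1 - 2 * (a : ℤ)) * ((if a = d then q⁻¹ else 0) -
      (if a = b then q else 0) + if a ∈ Ioo d b then q⁻¹ - q else 0) = 0 := by
  have hd : q ^ ((n : ℤ) - 1 - 2 * (d : ℤ)) * q⁻¹ = q ^ ((n : ℤ) - 2 - 2 * (d : ℤ)) := by
    rw [← zpow_sub_one₀ hq0]
    ring_nf
  have hb : q ^ ((n : ℤ) - 1 - 2 * (b : ℤ)) * q = q ^ ((n : ℤ) - 2 * (b : ℤ)) := by
    rw [← zpow_add_one₀ hq0]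
    ring_nf
  simp only [mul_add, mul_sub, mul_ite, mul_zero, sum_add_distrib, sum_sub_distrib, sum_ite_eq',
    sum_ite_mem, univ_inter, mem_univ, if_true, hd, hb]
  simp only [← sum_sub_distrib, ← mul_sub, sum_Ioo_zpow_mul hq0 hdb, sub_add_sub_cancel, sub_self]

theorem partialTrq_conj_rMatrix {q : ℂ} (hq0 : q ≠ 0) (Y : Matrix (Fin n) (Fin n) A) :
    partialTrq q (rMatrix q n A * (leg1 Y * rMatrix q⁻¹ n A)) =
      Matrix.diagonal fun _ => trq q Y := by
  ext b d
  simp only [partialTrq, conj_rMatrix_leg1_apply hq0]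
  rcases lt_trichotomy d b with hdb | rfl | hbd
  · simp only [hdb, hdb.ne', if_true, if_false, zero_add, smul_smul, mul_left_comm _ (q - q⁻¹),
      ← sum_smul, ← mul_sum]
    rw [sum_zpow_mul_eq_zero hq0 hdb, mul_zero, zero_smul, Matrix.diagonal_apply_ne _ hdb.ne']
  · simp [trq_eq_sum]
  · simp [hbd.not_gt, hbd.ne]

end PartialTrace

section RTT

variable {n : ℕ} {A : Type*} [Ring A] [Algebra ℂ A] {q : ℂ} {X Y Z : Matrix (Fin n) (Fin n) A}

/-- The relation `R X₁ Y₂ = Y₂ X₁ R` between two matrices over a `ℂ`-algebra, where the subscripts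
denote tensor legs. -/
def RTT (q : ℂ) (X Y : Matrix (Fin n) (Fin n) A) : Prop :=
  rMatrix q n A * leg1 X * leg2 Y = leg2 Y * leg1 X * rMatrix q n A

theorem RTT.semiconjBy (hq0 : q ≠ 0) (h : RTT q X Z) :
    SemiconjBy (leg1 X) (leg2 Z * rMatrix q⁻¹ n A) (rMatrix q⁻¹ n A * leg2 Z) := by
  let R := rMatrixUnit hq0 n A
  change leg1 X * (leg2 Z * (R⁻¹).val) = (R⁻¹).val * leg2 Z * leg1 X
  rw [mul_assoc, Units.eq_inv_mul_iff_mul_eq, ← mul_assoc, ← mul_assoc, Units.mul_inv_eq_iff_eq_mul]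
  exact h

theorem RTT.commute_pow (hq0 : q ≠ 0) {P : (Matrix (Fin n) (Fin n) A)ˣ} (hP : RTT q P.val Z)
    (hY : RTT q Y Z) (m : ℕ) :
    Commute (rMatrix q⁻¹ n A * leg2 Z) (leg1Hom n A ((Y * (P⁻¹).val) ^ m)) := by
  have hPinv : SemiconjBy (leg1 (P⁻¹).val) (rMatrix q⁻¹ n A * leg2 Z) (leg2 Z * rMatrix q⁻¹ n A) :=
    SemiconjBy.units_inv_symm_left (a := Units.map (leg1Hom n A) P) (hP.semiconjBy hq0)
  have hmul : Commute (leg1Hom n A (Y * (P⁻¹).val)) (rMatrix q⁻¹ n A * leg2 Z) := by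
    rw [map_mul]
    exact (hY.semiconjBy hq0).mul_left hPinv
  rw [map_pow]
  exact hmul.symm.pow_right m

theorem RTT.submatrix_rev (hq0 : q ≠ 0) (h : RTT q X Y) :
    RTT q⁻¹ (Y.submatrix Fin.rev Fin.rev) (X.submatrix Fin.rev Fin.rev) := by
  let R := rMatrixUnit hq0 n A
  have key := congrArg (fun Z => Z.submatrix (swapRev n) (swapRev n)) h
  simp only [← Matrix.submatrix_mul_equiv _ _ _ (swapRev n), rMatrix_submatrix_swapRev,
    leg1_submatrix_swapRev, leg2_submatrix_swapRev] at key
  change (R⁻¹).val * _ * _ = _ * _ * (R⁻¹).val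
  rw [Units.eq_mul_inv_iff_mul_eq, mul_assoc, mul_assoc, Units.inv_mul_eq_iff_eq_mul, ← mul_assoc,
    ← mul_assoc]
  exact key.symm

theorem commute_trq (hq0 : q ≠ 0) {L Y : Matrix (Fin n) (Fin n) A}
    (h : Commute (rMatrix q⁻¹ n A * leg2 L) (leg1 Y)) (b d : Fin n) :
    Commute (L b d) (trq q Y) := by
  have conj : leg2 L * leg1 Y = rMatrix q n A * (leg1 Y * rMatrix q⁻¹ n A) * leg2 L := by
    rw [mul_assoc, mul_assoc, ← h.eq, mul_assoc, ← mul_assoc, rMatrix_mul_rMatrix_inv hq0, one_mul]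
  calc L b d * trq q Y = partialTrq q (leg2 L * leg1 Y) b d :=
        (partialTrq_leg2_mul_leg1 q L Y b d).symm
    _ = trq q Y * L b d := by
        rw [conj, partialTrq_mul_leg2, partialTrq_conj_rMatrix hq0, Matrix.diagonal_mul]

theorem RTT.commute_trq_pow_right (hq0 : q ≠ 0) {P : (Matrix (Fin n) (Fin n) A)ˣ}
    (hP : RTT q P.val Z) (hY : RTT q Y Z) (m : ℕ) (b d : Fin n) :
    Commute (Z b d) (trq q ((Y * (P⁻¹).val) ^ m)) :=
  commute_trq hq0 (hP.commute_pow hq0 hY m) b d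

theorem RTT.commute_trq_pow_left (hq0 : q ≠ 0) {P : (Matrix (Fin n) (Fin n) A)ˣ}
    (hP : RTT q Z P.val) (hY : RTT q Z Y) (m : ℕ) (b d : Fin n) :
    Commute (Z b d) (trq q ((Y * (P⁻¹).val) ^ m)) := by
  have rev_mul (S T : Matrix (Fin n) (Fin n) A) :
      S.submatrix Fin.rev Fin.rev * T.submatrix Fin.rev Fin.rev =
        (S * T).submatrix Fin.rev Fin.rev :=
    Matrix.submatrix_mul_equiv S T Fin.rev Fin.revPerm Fin.rev
  have rev_one : (1 : Matrix (Fin n) (Fin n) A).submatrix Fin.rev Fin.rev = 1 :=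
    Matrix.submatrix_one _ Fin.rev_injective
  let P' : (Matrix (Fin n) (Fin n) A)ˣ :=
    ⟨P.val.submatrix Fin.rev Fin.rev, (P⁻¹).val.submatrix Fin.rev Fin.rev,
      by rw [rev_mul, P.mul_inv, rev_one], by rw [rev_mul, P.inv_mul, rev_one]⟩
  have hpow (k : ℕ) : (Y.submatrix Fin.rev Fin.rev * (P'⁻¹).val) ^ k =
      ((Y * (P⁻¹).val) ^ k).submatrix Fin.rev Fin.rev := by
    induction k with
    | zero => simp only [pow_zero, rev_one]
    | succ k ih =>
      rw [pow_succ, ih, pow_succ, ← rev_mul, ← rev_mul]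
      rfl
  have hrev := RTT.commute_trq_pow_right (P := P') (inv_ne_zero hq0) (hP.submatrix_rev hq0)
    (hY.submatrix_rev hq0) m b.rev d.rev
  rw [hpow, trq_inv_submatrix_rev, Matrix.submatrix_apply, Fin.rev_rev, Fin.rev_rev] at hrev
  exact hrev

end RTT

section HighestWeight

variable {ι K A V : Type*} [CommRing K] [Ring A] [Algebra K A] [AddCommGroup V] [Module K V]
  [Module A V] [IsScalarTower K A V]

/-- The entries of `X` act on `ξ` by the entries of the scalar matrix `diag(κ)`. -/
def ActsDiagonally [DecidableEq ι] (X : Matrix ι ι A) (κ : ι → K) (ξ : V) : Prop :=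
  ∀ i j, X i j • ξ = Matrix.diagonal κ i j • ξ

/-- `ξ` is a highest weight vector of weight `κ` with respect to `X`: the entries of `X` on and
above the diagonal act on `ξ` by the entries of `diag(κ)`. -/
def IsHighestWeightVector [LinearOrder ι] (X : Matrix ι ι A) (κ : ι → K) (ξ : V) : Prop :=
  ∀ i j, i ≤ j → X i j • ξ = Matrix.diagonal κ i j • ξ

theorem ActsDiagonally.mul_entry_smul [Fintype ι] [DecidableEq ι] {N : Matrix ι ι A} {κ : ι → K}
    {ξ : V} (hN : ActsDiagonally N κ ξ) (X : Matrix ι ι A) (i j : ι) :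
    (X * N) i j • ξ = κ j • X i j • ξ := by
  simp only [Matrix.mul_apply, sum_smul, SemigroupAction.mul_smul, hN _ j, Matrix.diagonal_apply,
    ite_smul, zero_smul, smul_ite, smul_zero, sum_ite_eq', mem_univ, if_true]
  rw [smul_comm]

theorem ActsDiagonally.inv [Fintype ι] [DecidableEq ι] {P : (Matrix ι ι A)ˣ} {κ κ' : ι → K}
    {ξ : V} (hκ : κ' * κ = 1) (hP : ActsDiagonally P.val κ ξ) : ActsDiagonally (P⁻¹).val κ' ξ := by
  intro i j
  calc (P⁻¹).val i j • ξ = κ' j • κ j • (P⁻¹).val i j • ξ := by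
        rw [smul_smul, ← Pi.mul_apply, hκ, Pi.one_apply, one_smul]
    _ = κ' j • (1 : Matrix ι ι A) i j • ξ := by rw [← hP.mul_entry_smul, P.inv_mul]
    _ = Matrix.diagonal κ' i j • ξ := by
        rcases eq_or_ne i j with rfl | hij
        · simp
        · simp [hij]

end HighestWeight

section HighestWeightRTT

variable {n : ℕ} {A V : Type*} [Ring A] [Algebra ℂ A] [AddCommGroup V] [Module ℂ V] [Module A V]
  [IsScalarTower ℂ A V] {q : ℂ} {L Y : Matrix (Fin n) (Fin n) A} {ξ : V}

theorem entry_mul_entry_of_commute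
    (h : Commute (rMatrix q⁻¹ n A * leg2 L) (leg1 Y)) {i k : Fin n} (hik : i < k) (j : Fin n) :
    L k j * Y i k + (q⁻¹ - q) • (L i j * Y k k) =
      q⁻¹ • (Y i k * L k j) + (q⁻¹ - q) • ∑ y ∈ Iio k, Y i y * L y j := by
  have hentry := congrFun₂ h.eq (i, k) (k, j)
  rw [mul_assoc, rMatrix_mul_apply, ← mul_assoc, mul_leg2_apply] at hentry
  simp only [leg2_mul_leg1_apply, mul_rMatrix_apply, leg1, inv_inv, hik, hik.ne, if_true, if_false,
    one_smul] at hentry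
  have term (x : Fin n) : ((((if k = x then q⁻¹ else 1) • if k = x then Y i k else 0) +
      if x < k then (q⁻¹ - q) • Y i x else 0) * L x j) =
        (if k = x then q⁻¹ • (Y i x * L x j) else 0) +
          if x < k then (q⁻¹ - q) • (Y i x * L x j) else 0 := by
    rw [add_mul]
    congr 1 <;> split_ifs with hx <;> simp [hx]
  rw [hentry, sum_congr rfl fun x _ => term x, sum_add_distrib, sum_ite_eq, if_pos (mem_univ k),
    ← sum_filter, filter_gt_eq_Iio, smul_sum]

theorem IsHighestWeightVector.entry_mul_entry_smul (hq0 : q ≠ 0)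
    (h : Commute (rMatrix q⁻¹ n A * leg2 L) (leg1 Y)) {y : Fin n → ℂ}
    (hY : IsHighestWeightVector Y y ξ) {i k : Fin n} (hik : i < k) (j : Fin n) :
    (Y i k * L k j) • ξ =
      (q ^ 2 - 1) • (∑ x ∈ Iio k, (Y i x * L x j) • ξ - y k • L i j • ξ) := by
  have hqq : q * (q⁻¹ - q) = 1 - q ^ 2 := by field_simp
  have hrel := congrArg (fun a : A => q • a • ξ) (entry_mul_entry_of_commute h hik j)
  simp only [add_smul, smul_assoc, sum_smul, mul_smul (L _ _), hY i k hik.le, hY k k le_rfl,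
    Matrix.diagonal_apply_ne _ hik.ne, Matrix.diagonal_apply_eq, zero_smul, smul_zero, zero_add,
    smul_comm _ (y k), smul_add, smul_smul q, mul_inv_cancel₀ hq0, hqq, one_smul] at hrel
  rw [eq_sub_of_add_eq hrel.symm, smul_comm, ← smul_sub, ← neg_sub (q ^ 2), neg_smul, ← smul_neg,
    neg_sub]

theorem IsHighestWeightVector.mul (hq0 : q ≠ 0) {y μ : Fin n → ℂ}
    (hY : IsHighestWeightVector Y y ξ) (hL : IsHighestWeightVector L μ ξ)
    (hlower : ∀ i j, i < j → L i j = 0) (h : Commute (rMatrix q⁻¹ n A * leg2 L) (leg1 Y)) :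
    IsHighestWeightVector (Y * L) (fun i => μ i * ((q ^ 2) ^ #(Ioi i) * y i -
      (q ^ 2 - 1) * ∑ k ∈ Ioi i, (q ^ 2) ^ #(Ioi k) * y k)) ξ := by
  intro i j hij
  have hsum := sum_eq_of_recurrence (q ^ 2) (fun k => (Y i k * L k j) • ξ)
    (fun k => y k • L i j • ξ) (T := Ioi i) (by simpa using isUpperSet_Ioi i)
    fun k hk => hY.entry_mul_entry_smul hq0 h (mem_Ioi.1 hk) j
  have hcompl : ∑ k ∈ (Ioi i)ᶜ, (Y i k * L k j) • ξ = y i • L i j • ξ := by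
    rw [sum_eq_single i]
    · rw [SemigroupAction.mul_smul, hL i j hij, smul_comm, hY i i le_rfl,
        Matrix.diagonal_apply_eq, smul_comm]
    · intro k hk hki
      have hkj : k < j := (lt_of_le_of_ne (by simpa using hk) hki).trans_le hij
      rw [hlower k j hkj, mul_zero, zero_smul]
    · simp
  rw [Matrix.mul_apply, sum_smul, hsum, hcompl, hL i j hij]
  rcases eq_or_ne i j with rfl | hne
  · simp only [Matrix.diagonal_apply_eq, smul_smul, ← sum_smul, ← sub_smul, ← sum_mul, ← mul_assoc,
      ← sub_mul]
    rw [mul_comm]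
  · simp [hne]

theorem IsHighestWeightVector.pow (hq0 : q ≠ 0) {N : Matrix (Fin n) (Fin n) A} {μ κ : Fin n → ℂ}
    (hL : IsHighestWeightVector L μ ξ) (hlower : ∀ i j, i < j → L i j = 0)
    (hN : ActsDiagonally N κ ξ)
    (h : ∀ m, Commute (rMatrix q⁻¹ n A * leg2 L) (leg1Hom n A ((L * N) ^ m))) (m : ℕ) :
    IsHighestWeightVector ((L * N) ^ m) (diagEigenvalue (q ^ 2) (μ * κ) m) ξ := by
  induction m with
  | zero =>
    intro i j _
    rcases eq_or_ne i j with rfl | hij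
    · simp [diagEigenvalue]
    · simp [hij]
  | succ m ih =>
    intro i j hij
    rw [pow_succ, ← mul_assoc, hN.mul_entry_smul, ih.mul hq0 hL hlower (h m) i j hij, smul_smul]
    congr 1
    rcases eq_or_ne i j with rfl | hij
    · simp only [Matrix.diagonal_apply_eq, diagEigenvalue, Pi.mul_apply]
      ring
    · simp [hij]

theorem sq_pow_card_Ioi (q : ℂ) (i : Fin n) :
    (q ^ 2) ^ #(Ioi i) = q ^ (2 * ((n : ℤ) - 1 - (i : ℤ))) := by
  rw [Fin.card_Ioi, ← pow_mul, ← zpow_natCast]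
  congr 1
  omega

theorem IsHighestWeightVector.trq_smul (hq0 : q ≠ 0) {ν : Fin n → ℂ}
    (hz : Function.Injective fun i => (q ^ 2) ^ #(Ioi i) * ν i) {m : ℕ}
    (hY : IsHighestWeightVector Y (diagEigenvalue (q ^ 2) ν m) ξ) :
    trq q Y • ξ = (q ^ (1 - (n : ℤ)) *
      hallLittlewoodSum (q ^ 2) (fun i => (q ^ 2) ^ #(Ioi i) * ν i) univ m) • ξ := by
  rw [trq_eq_sum, sum_smul, ← sum_diagEigenvalue (q ^ 2) ν hz m (by simpa using isUpperSet_univ),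
    mul_sum, sum_smul]
  refine sum_congr rfl fun i _ => ?_
  rw [smul_assoc, hY i i le_rfl, Matrix.diagonal_apply_eq, smul_smul, ← mul_assoc,
    sq_pow_card_Ioi q, ← zpow_add₀ hq0]
  ring_nf

end HighestWeightRTT

section UqGL

variable {q : ℂ} {n : ℕ}

theorem LM_false_eq_zero {i j : Fin n} (hij : i < j) : LM q n false i j = 0 :=
  (RingQuot.mkAlgHom_rel ℂ (relGL.tri_minus hij)).trans (map_zero _)

theorem LM_true_eq_zero {i j : Fin n} (hij : i < j) : LM q n true j i = 0 :=
  (RingQuot.mkAlgHom_rel ℂ (relGL.tri_plus hij)).trans (map_zero _)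

theorem LM_true_mul_LM_false (i : Fin n) : LM q n true i i * LM q n false i i = 1 := by
  simpa [LM, lG] using RingQuot.mkAlgHom_rel ℂ (relGL.diag_pm (q := q) i)

theorem rtt_LM {p p' : Bool} (h : ∀ v w, relGL q n
    ((RcGL q n * leg1 (gl n p) * leg2 (gl n p')) v w)
    ((leg2 (gl n p') * leg1 (gl n p) * RcGL q n) v w)) : RTT q (LM q n p) (LM q n p') := by
  let π := RingQuot.mkAlgHom ℂ (relGL q n)
  have hR : (RcGL q n).map π = rMatrix q n (UqGL q n) := by
    ext
    simp [RcGL, rMatrix]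
  have h1 : (leg1 (gl n p)).map π = leg1 (LM q n p) := by
    ext
    simp only [leg1, Matrix.map_apply, apply_ite π, map_zero]
    rfl
  have h2 : (leg2 (gl n p')).map π = leg2 (LM q n p') := by
    ext
    simp only [leg2, Matrix.map_apply, apply_ite π, map_zero]
    rfl
  have hmap : (RcGL q n * leg1 (gl n p) * leg2 (gl n p')).map π =
      (leg2 (gl n p') * leg1 (gl n p) * RcGL q n).map π := by
    ext v w
    exact RingQuot.mkAlgHom_rel ℂ (h v w)
  simp only [Matrix.map_mul, hR, h1, h2] at hmap
  exact hmap

theorem commute_trq_pow (hq0 : q ≠ 0) {P : (Matrix (Fin n) (Fin n) (UqGL q n))ˣ}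
    (hP : P.val = LM q n true) (m : ℕ) (x : UqGL q n) :
    Commute x (trq q ((LM q n false * (P⁻¹).val) ^ m)) := by
  have rtt_pm : RTT q (LM q n true) (LM q n false) := rtt_LM relGL.rll_pm
  obtain ⟨x, rfl⟩ := RingQuot.mkAlgHom_surjective ℂ (relGL q n) x
  induction x using FreeAlgebra.induction with
  | grade0 r =>
    rw [AlgHom.commutes]
    exact Algebra.commutes r _
  | grade1 g =>
    obtain ⟨p, i, j⟩ := g
    cases p with
    | false =>
      refine RTT.commute_trq_pow_right hq0 ?_ (rtt_LM (relGL.rll false)) m i j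
      rwa [hP]
    | true =>
      refine RTT.commute_trq_pow_left hq0 ?_ rtt_pm m i j
      rw [hP]
      exact rtt_LM (relGL.rll true)
  | mul a b ha hb =>
    rw [map_mul]
    exact ha.mul_left hb
  | add a b ha hb =>
    rw [map_add]
    exact ha.add_left hb

variable {V : Type*} [AddCommGroup V] [Module ℂ V] [Module (UqGL q n) V] {ξ : V} {μ : Fin n → ℂ}

theorem isHighestWeightVector_LM_false (hhw2 : ∀ i, LM q n false i i • ξ = μ i • ξ) :
    IsHighestWeightVector (LM q n false) μ ξ := by
  intro i j hij
  rcases hij.lt_or_eq with hij | rfl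
  · rw [LM_false_eq_zero hij, zero_smul, Matrix.diagonal_apply_ne _ hij.ne, zero_smul]
  · rw [hhw2, Matrix.diagonal_apply_eq]

variable [IsScalarTower ℂ (UqGL q n) V]

theorem actsDiagonally_LM_true (hμ : ∀ i, μ i ≠ 0)
    (hhw1 : ∀ i j, i < j → LM q n true i j • ξ = 0)
    (hhw2 : ∀ i, LM q n false i i • ξ = μ i • ξ) : ActsDiagonally (LM q n true) μ⁻¹ ξ := by
  intro i j
  rcases lt_trichotomy i j with hij | rfl | hji
  · rw [hhw1 i j hij, Matrix.diagonal_apply_ne _ hij.ne, zero_smul]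
  · rw [Matrix.diagonal_apply_eq, Pi.inv_apply, eq_inv_smul_iff₀ (hμ i), smul_comm, ← hhw2,
      ← SemigroupAction.mul_smul, LM_true_mul_LM_false, one_smul]
  · rw [LM_true_eq_zero hji, zero_smul, Matrix.diagonal_apply_ne _ hji.ne', zero_smul]

theorem isHighestWeightVector_pow (hq0 : q ≠ 0) {P : (Matrix (Fin n) (Fin n) (UqGL q n))ˣ}
    (hP : P.val = LM q n true) (hμ : ∀ i, μ i ≠ 0)
    (hhw1 : ∀ i j, i < j → LM q n true i j • ξ = 0)
    (hhw2 : ∀ i, LM q n false i i • ξ = μ i • ξ) (m : ℕ) :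
    IsHighestWeightVector ((LM q n false * (P⁻¹).val) ^ m)
      (diagEigenvalue (q ^ 2) (μ ^ 2) m) ξ := by
  have hPinv : ActsDiagonally (P⁻¹).val μ ξ := by
    refine ActsDiagonally.inv (κ := μ⁻¹) (funext fun i => mul_inv_cancel₀ (hμ i)) ?_
    exact hP ▸ actsDiagonally_LM_true hμ hhw1 hhw2
  have hcomm := RTT.commute_pow (P := P) hq0 (by rw [hP]; exact rtt_LM relGL.rll_pm)
    (rtt_LM (relGL.rll false))
  rw [sq μ]
  exact (isHighestWeightVector_LM_false hhw2).pow hq0 (fun _ _ => LM_false_eq_zero) hPinv hcomm m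

end UqGL

theorem stmt_0_general {n : ℕ} {q : ℂ} (hq0 : q ≠ 0) (hq2 : q ^ 2 ≠ 1) {lam ell : Fin n → ℤ}
    (hell : ∀ i : Fin n, ell i = lam i + (n : ℤ) - 1 - (i : ℤ))
    (hdist : Function.Injective fun i => q ^ (2 * ell i))
    {Lpinv : Matrix (Fin n) (Fin n) (UqGL q n)}
    (hLp1 : LM q n true * Lpinv = 1) (hLp2 : Lpinv * LM q n true = 1)
    {V : Type*} [AddCommGroup V] [Module (UqGL q n) V] {ξ : V}
    (hgen : Submodule.span (UqGL q n) {ξ} = ⊤)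
    (hhw1 : ∀ i j : Fin n, i < j → lG q n true i j • ξ = 0)
    (hhw2 : ∀ i : Fin n, lG q n false i i • ξ = algebraMap ℂ (UqGL q n) (q ^ (lam i)) • ξ)
    (m : ℕ) (v : V) :
    trq q ((LM q n false * Lpinv) ^ m) • v =
      algebraMap ℂ (UqGL q n)
        (∑ k : Fin n, q ^ (2 * ell k * (m : ℤ)) *
          ((∏ j : Fin n, qint q (ell j - ell k + 1)) /
            (∏ j ∈ Finset.univ.erase k, qint q (ell j - ell k)))) • v := by
  let _ : Module ℂ V := Module.compHom V (algebraMap ℂ (UqGL q n))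
  have : IsScalarTower ℂ (UqGL q n) V := IsScalarTower.of_algebraMap_smul fun _ _ => rfl
  let P : (Matrix (Fin n) (Fin n) (UqGL q n))ˣ := ⟨LM q n true, Lpinv, hLp1, hLp2⟩
  have hz (i : Fin n) : (q ^ 2) ^ #(Ioi i) * ((fun i => q ^ lam i) ^ 2) i = q ^ (2 * ell i) := by
    rw [sq_pow_card_Ioi, Pi.pow_apply, ← zpow_natCast, ← _root_.zpow_mul, ← zpow_add₀ hq0, hell]
    push_cast
    ring_nf
  have hξ := (isHighestWeightVector_pow hq0 (P := P) rfl (fun i => zpow_ne_zero (lam i) hq0) hhw1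
    hhw2 m).trq_smul hq0 (by simpa only [hz] using hdist)
  simp only [hz] at hξ
  obtain ⟨a, rfl⟩ := Submodule.mem_span_singleton.1 (hgen ▸ Submodule.mem_top : v ∈ _)
  have hcentral : a * trq q ((LM q n false * Lpinv) ^ m) = trq q ((LM q n false * Lpinv) ^ m) * a :=
    commute_trq_pow hq0 (P := P) rfl m a
  rw [sum_qint_eq_hallLittlewoodSum hq0 hq2, Fintype.card_fin, algebraMap_smul,
    ← SemigroupAction.mul_smul, ← hcentral, SemigroupAction.mul_smul]
  exact (congrArg (a • ·) hξ).trans (smul_comm _ _ _)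

/-- **Theorem 1.1.** Eigenvalues of the quantum Gelfand invariants
`tr_q M^m`, `M = L⁻(L⁺)⁻¹`, in the irreducible highest weight module `L_q(λ)`. -/
theorem stmt_0 (n : ℕ) (hn : 1 ≤ n) (q : ℂ) (hq0 : q ≠ 0)
    (hq : ∀ k : ℕ, k ≠ 0 → q ^ k ≠ 1)
    (lam : Fin n → ℤ) (ell : Fin n → ℤ)
    (hell : ∀ i : Fin n, ell i = lam i + (n : ℤ) - 1 - (i : ℤ))
    (hdist : Function.Injective ell)
    (Lpinv : Matrix (Fin n) (Fin n) (UqGL q n))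
    (hLp1 : LM q n true * Lpinv = 1) (hLp2 : Lpinv * LM q n true = 1)
    (V : Type*) [AddCommGroup V] [Module (UqGL q n) V]
    (hirr : IsSimpleModule (UqGL q n) V)
    (ξ : V) (hξ : ξ ≠ 0)
    (hhw1 : ∀ i j : Fin n, i < j → lG q n true i j • ξ = 0)
    (hhw2 : ∀ i : Fin n, lG q n false i i • ξ = algebraMap ℂ (UqGL q n) (q ^ (lam i)) • ξ)
    (m : ℕ) (v : V) :
    trq q ((LM q n false * Lpinv) ^ m) • v =
      algebraMap ℂ (UqGL q n)
        (∑ k : Fin n, q ^ (2 * ell k * (m : ℤ)) *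
          ((∏ j : Fin n, qint q (ell j - ell k + 1)) /
            (∏ j ∈ Finset.univ.erase k, qint q (ell j - ell k)))) • v := by
  have hdist' : Function.Injective fun i => q ^ (2 * ell i) :=
    (injective_zpow_of_pow_ne_one hq0 hq).comp ((mul_right_injective₀ two_ne_zero).comp hdist)
  exact stmt_0_general hq0 (hq 2 two_ne_zero) hell hdist' hLp1 hLp2
    (IsSimpleModule.span_singleton_eq_top (UqGL q n) hξ) hhw1 hhw2 m v
end

section
/- Let σ ∈ S_k and let σ = s_{i₁}⋯s_{i_l} be any reduced decomposition of σ into adjacent transpositions; set P^q_σ = P^q_{i₁,i₁+1} ⋯ P^q_{i_l,i_l+1} as an operator on (ℂ^n)^{⊗k}. Then for any indices 1 ≤ a₁ < a₂ < ⋯ < a_k ≤ n and any τ ∈ S_k, P^q_σ( e_{a_{τ(1)}} ⊗ ⋯ ⊗ e_{a_{τ(k)}} ) = q^{l(στ^{−1}) − l(τ)} · e_{a_{τσ^{−1}(1)}} ⊗ ⋯ ⊗ e_{a_{τσ^{−1}(k)}}, where l(·) denotes the length of a permutation. In particular, P^q_σ does not depend on the chosen reduced decomposition. -/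
open Matrix Equiv

/-- Number of inversions of a permutation, i.e. its Coxeter length. -/
def invCount {m : ℕ} (σ : Equiv.Perm (Fin m)) : ℕ :=
  (Finset.univ.filter fun p : Fin m × Fin m => p.1 < p.2 ∧ σ p.2 < σ p.1).card

/-- `L` is a reduced decomposition of `σ` into adjacent transpositions `s_i = (i, i+1)`. -/
def IsReducedWord {m : ℕ} (σ : Equiv.Perm (Fin (m + 1))) (L : List (Fin m)) : Prop :=
  (L.map fun i => Equiv.swap (Fin.castSucc i) i.succ).prod = σ ∧ L.length = invCount σ

/-- The `q`-permutation operator `P^q` acting in the tensor legs `i, i+1` of `(ℂ^n)^{⊗(m+1)}`,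
written as a matrix in the standard tensor basis (indexed by functions `Fin (m+1) → Fin n`).
Here `P^q = ∑ e_{ii}⊗e_{ii} + q∑_{i>j} e_{ij}⊗e_{ji} + q⁻¹∑_{i<j} e_{ij}⊗e_{ji}`. -/
noncomputable def Pstep (q : ℂ) (n m : ℕ) (i : Fin m) :
    Matrix (Fin (m + 1) → Fin n) (Fin (m + 1) → Fin n) ℂ :=
  fun v w =>
    if (∀ b, b ≠ Fin.castSucc i → b ≠ i.succ → v b = w b) then
      (if w (Fin.castSucc i) = v i.succ ∧ w i.succ = v (Fin.castSucc i) then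
        (if v (Fin.castSucc i) = v i.succ then 1
         else if v i.succ < v (Fin.castSucc i) then q else q⁻¹)
       else 0)
    else 0

/-! After the rescaling `e_w ↦ q ^ inv(w) e_w` of the tensor basis, `inv(w)` being the number of
inversions of the word `w`, the operator `P^q_{i,i+1}` merely permutes the basis: exchanging two
adjacent letters in increasing order creates exactly one inversion, which absorbs the factor `q`,
exchanging them back absorbs `q⁻¹`, and two equal letters give the factor `1`. So every product of
these operators, reduced or not, acts by place permutation on the rescaled basis. -/

/-- The inversions of a word `w : ι → α`: the pairs of positions whose letters are out of order.
For a permutation this is the set counted by `invCount`. -/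
def inversions {ι α : Type*} [Fintype ι] [LinearOrder ι] [LinearOrder α] (w : ι → α) :
    Finset (ι × ι) :=
  Finset.univ.filter fun p => p.1 < p.2 ∧ w p.2 < w p.1

section Inversions

variable {ι α β : Type*} [LinearOrder ι] [LinearOrder α] [LinearOrder β]

theorem swap_lt_swap_iff_of_covBy {a b : ι} (hab : a ⋖ b) {x y : ι} :
    swap a b x < swap a b y ↔ x < y ∧ ¬(x = a ∧ y = b) ∨ x = b ∧ y = a := by
  have left_iff (z : ι) : z < b ↔ z ≤ a := hab.lt_iff_le_left
  have right_iff (z : ι) : a < z ↔ b ≤ z := hab.lt_iff_le_right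
  grind

variable [Fintype ι]

theorem mem_inversions {w : ι → α} {p : ι × ι} :
    p ∈ inversions w ↔ p.1 < p.2 ∧ w p.2 < w p.1 := by
  simp only [inversions, Finset.mem_filter_univ]

theorem inversions_strictMono_comp {f : α → β} (hf : StrictMono f) (w : ι → α) :
    inversions (f ∘ w) = inversions w := by
  ext p
  simp only [mem_inversions, Function.comp_apply, hf.lt_iff_lt]

theorem card_inversions_symm [Fintype α] (e : ι ≃ α) :
    (inversions e.symm).card = (inversions e).card := by
  refine Finset.card_equiv ((e.symm.prodCongr e.symm).trans (Equiv.prodComm ι ι)) fun p => ?_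
  simp [mem_inversions, and_comm]

theorem inversions_comp_swap_of_lt {w : ι → α} {a b : ι} (hab : a ⋖ b) (hw : w a < w b) :
    inversions (w ∘ swap a b) =
      insert (a, b) ((inversions w).map ((swap a b).prodCongr (swap a b)).toEmbedding) := by
  ext ⟨x, y⟩
  simp only [mem_inversions, Finset.mem_insert, Finset.mem_map_equiv, prodCongr_symm, symm_swap,
    prodCongr_apply, Prod.map_apply, Function.comp_apply, Prod.mk.injEq,
    swap_lt_swap_iff_of_covBy hab]
  grind [swap_apply_left, swap_apply_right, hab.lt, hw.not_gt]

theorem card_inversions_comp_swap_of_lt {w : ι → α} {a b : ι} (hab : a ⋖ b) (hw : w a < w b) :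
    (inversions (w ∘ swap a b)).card = (inversions w).card + 1 := by
  rw [inversions_comp_swap_of_lt hab hw, Finset.card_insert_of_notMem, Finset.card_map]
  simp [Finset.mem_map_equiv, mem_inversions, hab.lt.le]

theorem card_inversions_comp_swap_of_gt {w : ι → α} {a b : ι} (hab : a ⋖ b) (hw : w b < w a) :
    (inversions w).card = (inversions (w ∘ swap a b)).card + 1 := by
  have hlt : (w ∘ swap a b) a < (w ∘ swap a b) b := by simpa using hw
  simpa [Function.comp_assoc, ← Perm.coe_mul] using card_inversions_comp_swap_of_lt hab hlt

end Inversions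

section InvCount

variable {α : Type*} [LinearOrder α] {m : ℕ} {a : Fin m → α}

theorem card_inversions_comp_perm (ha : StrictMono a) (τ : Perm (Fin m)) :
    (inversions (a ∘ τ)).card = invCount τ := by
  rw [inversions_strictMono_comp ha, inversions, invCount]

theorem card_inversions_comp_perm_inv (ha : StrictMono a) (σ τ : Perm (Fin m)) :
    (inversions ((a ∘ τ) ∘ ⇑σ⁻¹)).card = invCount (σ * τ⁻¹) := by
  rw [Function.comp_assoc, inversions_strictMono_comp ha]
  exact card_inversions_symm (σ * τ⁻¹)

end InvCount

theorem comp_swap_eq_self {ι α : Type*} [DecidableEq ι] {w : ι → α} {a b : ι} (h : w a = w b) :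
    w ∘ swap a b = w := by
  ext c
  exact apply_swap_eq_self h c

theorem eq_comp_swap_iff {ι α : Type*} [DecidableEq ι] {v w : ι → α} {a b : ι} :
    v = w ∘ swap a b ↔ (∀ c, c ≠ a → c ≠ b → v c = w c) ∧ w a = v b ∧ w b = v a := by
  simp only [funext_iff, Function.comp_apply, swap_apply_def]
  grind

section QPermutation

variable (q : ℂ) {n m : ℕ}

theorem Pstep_apply (i : Fin m) (v w : Fin (m + 1) → Fin n) :
    Pstep q n m i v w =
      if v = w ∘ swap i.castSucc i.succ then
        if w i.castSucc = w i.succ then 1 else if w i.castSucc < w i.succ then q else q⁻¹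
      else 0 := by
  simp only [Pstep, eq_comp_swap_iff]
  grind

/-- The vector `q ^ inv(w) e_w`, where `e_w` is the tensor basis vector of the word `w`. In this
rescaled basis the operators `P^q_{i,i+1}` act as plain permutations. -/
noncomputable def rescaledBasis (w : Fin (m + 1) → Fin n) : (Fin (m + 1) → Fin n) → ℂ :=
  Pi.single w (q ^ (inversions w).card)

theorem rescaledBasis_eq_smul_single (w : Fin (m + 1) → Fin n) :
    rescaledBasis q w = (q ^ (inversions w).card) • Pi.single w 1 := by
  rw [rescaledBasis, ← Pi.single_smul, smul_eq_mul, mul_one]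

variable {q}

theorem Pstep_mulVec_rescaledBasis (hq : q ≠ 0) (i : Fin m) (w : Fin (m + 1) → Fin n) :
    Pstep q n m i *ᵥ rescaledBasis q w = rescaledBasis q (w ∘ swap i.castSucc i.succ) := by
  have hi : i.castSucc ⋖ i.succ := Fin.covBy_iff.2 (by simp)
  ext v
  simp only [rescaledBasis, mulVec_single, Pi.smul_apply, col_apply, Pstep_apply,
    MulOpposite.smul_eq_mul_unop, MulOpposite.unop_op, Pi.single_apply, ite_mul, zero_mul]
  congr 1
  rcases lt_trichotomy (w i.castSucc) (w i.succ) with h | h | h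
  · rw [if_neg h.ne, if_pos h, card_inversions_comp_swap_of_lt hi h, pow_succ']
  · rw [if_pos h, one_mul, comp_swap_eq_self h]
  · rw [if_neg h.ne', if_neg h.not_gt, card_inversions_comp_swap_of_gt hi h, pow_succ',
      inv_mul_cancel_left₀ hq]

theorem prod_Pstep_mulVec_rescaledBasis (hq : q ≠ 0) (L : List (Fin m))
    (w : Fin (m + 1) → Fin n) :
    (L.map (Pstep q n m)).prod *ᵥ rescaledBasis q w =
      rescaledBasis q (w ∘ ⇑(L.map fun i => swap i.castSucc i.succ).prod⁻¹) := by
  induction L with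
  | nil => simp
  | cons i L ih =>
    rw [List.map_cons, List.prod_cons, ← mulVec_mulVec, ih, Pstep_mulVec_rescaledBasis hq,
      List.map_cons, List.prod_cons, _root_.mul_inv_rev, swap_inv, Perm.coe_mul,
      Function.comp_assoc]

theorem prod_Pstep_mulVec_single (hq : q ≠ 0) {σ : Perm (Fin (m + 1))} {L : List (Fin m)}
    (hL : (L.map fun i => swap i.castSucc i.succ).prod = σ) (w : Fin (m + 1) → Fin n) :
    (L.map (Pstep q n m)).prod *ᵥ Pi.single w (1 : ℂ) =
      (q ^ (((inversions (w ∘ ⇑σ⁻¹)).card : ℤ) - ((inversions w).card : ℤ))) •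
        (Pi.single (w ∘ ⇑σ⁻¹) 1 : (Fin (m + 1) → Fin n) → ℂ) := by
  refine smul_right_injective _ (pow_ne_zero (inversions w).card hq) ?_
  beta_reduce
  rw [← mulVec_smul, ← rescaledBasis_eq_smul_single, prod_Pstep_mulVec_rescaledBasis hq, hL,
    rescaledBasis_eq_smul_single, smul_smul, zpow_sub₀ hq, zpow_natCast, zpow_natCast,
    mul_div_cancel₀ _ (pow_ne_zero _ hq)]

end QPermutation

theorem stmt_11_general (n m : ℕ) (q : ℂ) (hq0 : q ≠ 0) (σ : Perm (Fin (m + 1)))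
    (L : List (Fin m)) (hL : (L.map fun i => swap i.castSucc i.succ).prod = σ)
    (w : Fin (m + 1) → Fin n) :
    (L.map (Pstep q n m)).prod *ᵥ Pi.single w (1 : ℂ) =
        (q ^ (((inversions (w ∘ ⇑σ⁻¹)).card : ℤ) - ((inversions w).card : ℤ))) •
          (Pi.single (w ∘ ⇑σ⁻¹) 1 : (Fin (m + 1) → Fin n) → ℂ) ∧
      ∀ L' : List (Fin m), (L'.map fun i => swap i.castSucc i.succ).prod = σ →
        (L.map (Pstep q n m)).prod = (L'.map (Pstep q n m)).prod := by
  refine ⟨prod_Pstep_mulVec_single hq0 hL w, fun L' hL' => ext_of_mulVec_single fun v => ?_⟩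
  rw [prod_Pstep_mulVec_single hq0 hL, prod_Pstep_mulVec_single hq0 hL']

/-- For any reduced decomposition `σ = s_{i₁}⋯s_{i_l}`, the operator
`P^q_σ = P^q_{i₁,i₁+1}⋯P^q_{i_l,i_l+1}` satisfies, for strictly increasing `a₁ < ⋯ < a_k`
and any `τ ∈ S_k`,
`P^q_σ(e_{a∘τ}) = q^{l(στ⁻¹) − l(τ)} e_{a∘τ∘σ⁻¹}`;
in particular `P^q_σ` does not depend on the chosen reduced decomposition. -/
theorem stmt_11 (n m : ℕ) (q : ℂ) (hq0 : q ≠ 0)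
    (σ : Equiv.Perm (Fin (m + 1))) (L : List (Fin m)) (hL : IsReducedWord σ L)
    (a : Fin (m + 1) → Fin n) (ha : StrictMono a) (τ : Equiv.Perm (Fin (m + 1))) :
    (L.map (Pstep q n m)).prod *ᵥ Pi.single (a ∘ τ) (1 : ℂ) =
        (q ^ ((invCount (σ * τ⁻¹) : ℤ) - (invCount τ : ℤ))) •
          (Pi.single (a ∘ τ ∘ ⇑σ⁻¹) 1 : (Fin (m + 1) → Fin n) → ℂ) ∧
      ∀ L' : List (Fin m), IsReducedWord σ L' →
        (L.map (Pstep q n m)).prod = (L'.map (Pstep q n m)).prod := by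
  have h := stmt_11_general n m q hq0 σ L hL.1 (a ∘ τ)
  rw [card_inversions_comp_perm ha, card_inversions_comp_perm_inv ha] at h
  exact ⟨h.1, fun L' hL' => h.2 L' hL'.1⟩
end

section
/- In the quantized enveloping algebra U_q(gl_n), for every integer m ≥ 0 the following identities hold: tr( D^{−1} · ((L⁺)^{−1}L⁻)^m ) = tr( D · (L⁻(L⁺)^{−1})^m ) and tr( D^{−1} · ((L⁻)^{−1}L⁺)^m ) = tr( D · (L⁺(L⁻)^{−1})^m ). -/
open Matrix

/-!
Let `P` be the flip of the two tensor legs. A telescoping sum shows that the partial traces of `RP`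
weighted by `D` and by `D⁻¹` are scalar: `tr₁(D₁ R P) = qⁿ = tr₂(D₂⁻¹ R P)`.

Let `L = L⁺`. The relations say that both `(L⁺)₂` and `(L⁻)₂` intertwine `L₁ R` with `R L₁`. Hence
`L₂⁻¹ R L₁ = L₁ R L₂⁻¹`, and any power `X` of `L⁻(L⁺)⁻¹` or of its inverse satisfies
`X₂ R L₁ = R L₁ X₂`. Therefore

`qⁿ tr(D⁻¹ L⁻¹ X L) = tr(D⁻¹ L⁻¹ tr₁(D₁ X₂ R L₁ P)) = tr(D⁻¹ L⁻¹ tr₁(D₁ R L₁ X₂ P))`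
`  = tr tr₂(D₂⁻¹ L₂⁻¹ D₁ R L₁ X₂ P) = tr tr₂(D₁ L₁ D₂⁻¹ R L₂⁻¹ X₂ P) = qⁿ tr(D X)`.
-/

section Legs

variable {n : ℕ} {A : Type*} [Semiring A]

theorem leg1_mul (X Y : Matrix (Fin n) (Fin n) A) :
    leg1 (X * Y : Matrix (Fin n) (Fin n) A) = leg1 X * leg1 Y := by
  ext ⟨a, c⟩ ⟨b, d⟩
  by_cases h : c = d <;> simp [leg1, Matrix.mul_apply, Fintype.sum_prod_type, h]

theorem leg2_mul (X Y : Matrix (Fin n) (Fin n) A) :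
    leg2 (X * Y : Matrix (Fin n) (Fin n) A) = leg2 X * leg2 Y := by
  ext ⟨a, c⟩ ⟨b, d⟩
  by_cases h : a = b <;> simp [leg2, Matrix.mul_apply, Fintype.sum_prod_type, h]

theorem leg2_one : leg2 (1 : Matrix (Fin n) (Fin n) A) = 1 := by
  ext ⟨a, c⟩ ⟨b, d⟩
  by_cases h : a = b <;> simp [leg2, Matrix.one_apply, h]

/-- The embedding `X ↦ X₂` as a monoid homomorphism, so that it acts on powers and on units. -/
def leg2Hom : Matrix (Fin n) (Fin n) A →* Matrix (Fin n × Fin n) (Fin n × Fin n) A where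
  toFun X := leg2 X
  map_one' := leg2_one
  map_mul' := leg2_mul

theorem leg1_map {B : Type*} [Semiring B] (φ : A →+* B) (X : Matrix (Fin n) (Fin n) A) :
    leg1 (X.map φ) = (leg1 X).map φ := by
  ext v w
  simp [leg1, apply_ite φ]

theorem leg2_map {B : Type*} [Semiring B] (φ : A →+* B) (X : Matrix (Fin n) (Fin n) A) :
    leg2 (X.map φ) = (leg2 X).map φ := by
  ext v w
  simp [leg2, apply_ite φ]

theorem commute_leg1_leg2 {X Y : Matrix (Fin n) (Fin n) A}
    (h : ∀ i j k l, Commute (X i j) (Y k l)) : Commute (leg1 X) (leg2 Y) := by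
  ext ⟨a, c⟩ ⟨b, d⟩
  simpa [leg1, leg2, Matrix.mul_apply, Fintype.sum_prod_type] using (h a b c d).eq

theorem leg1_diagonal (d : Fin n → A) :
    leg1 (Matrix.diagonal d) = Matrix.diagonal fun v : Fin n × Fin n => d v.1 := by
  ext ⟨a, c⟩ ⟨b, e⟩
  by_cases h : c = e <;> simp [leg1, Matrix.diagonal_apply, h]

theorem leg2_diagonal (d : Fin n → A) :
    leg2 (Matrix.diagonal d) = Matrix.diagonal fun v : Fin n × Fin n => d v.2 := by
  ext ⟨a, c⟩ ⟨b, e⟩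
  by_cases h : a = b <;> simp [leg2, Matrix.diagonal_apply, h]

theorem commute_diagonal_algebraMap_apply {ι K : Type*} [DecidableEq ι] [CommSemiring K]
    [Algebra K A] (d : ι → K) (i j : ι) (x : A) :
    Commute (Matrix.diagonal (fun k => algebraMap K A (d k)) i j) x := by
  rw [Matrix.diagonal_apply]
  split_ifs
  exacts [Algebra.commutes _ _, Commute.zero_left x]

end Legs

section FlipTrace

/-- The partial trace `tr₁(TP)` over the first leg, where `P` is the flip of the two legs. -/
def flipTraceFst {ι A : Type*} [Fintype ι] [AddCommMonoid A] (T : Matrix (ι × ι) (ι × ι) A) :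
    Matrix ι ι A :=
  fun c b => ∑ a, T (a, c) (b, a)

/-- The partial trace `tr₂(TP)` over the second leg, where `P` is the flip of the two legs. -/
def flipTraceSnd {ι A : Type*} [Fintype ι] [AddCommMonoid A] (T : Matrix (ι × ι) (ι × ι) A) :
    Matrix ι ι A :=
  fun a d => ∑ b, T (a, b) (b, d)

variable {n : ℕ} {A : Type*} [Semiring A]

theorem flipTraceFst_leg2_mul_mul_leg1 (X Y : Matrix (Fin n) (Fin n) A)
    (T : Matrix (Fin n × Fin n) (Fin n × Fin n) A) :
    flipTraceFst (leg2 X * T * leg1 Y) = X * flipTraceFst T * Y := by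
  ext c b
  simp only [flipTraceFst, leg1, leg2, Matrix.mul_apply, Fintype.sum_prod_type, ite_mul, mul_ite,
    zero_mul, mul_zero, Finset.sum_ite_irrel, Finset.sum_const_zero, Finset.sum_ite_eq,
    Finset.sum_ite_eq', Finset.mem_univ, if_true, Finset.mul_sum, Finset.sum_mul]
  rw [Finset.sum_comm]
  exact Finset.sum_congr rfl fun _ _ => Finset.sum_comm

theorem flipTraceSnd_leg1_mul_mul_leg2 (X Y : Matrix (Fin n) (Fin n) A)
    (T : Matrix (Fin n × Fin n) (Fin n × Fin n) A) :
    flipTraceSnd (leg1 X * T * leg2 Y) = X * flipTraceSnd T * Y := by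
  ext a d
  simp only [flipTraceSnd, leg1, leg2, Matrix.mul_apply, Fintype.sum_prod_type, ite_mul, mul_ite,
    zero_mul, mul_zero, Finset.sum_ite_irrel, Finset.sum_const_zero, Finset.sum_ite_eq,
    Finset.sum_ite_eq', Finset.mem_univ, if_true, Finset.mul_sum, Finset.sum_mul]
  rw [Finset.sum_comm]
  exact Finset.sum_congr rfl fun _ _ => Finset.sum_comm

theorem trace_mul_flipTraceFst (Z : Matrix (Fin n) (Fin n) A)
    (T : Matrix (Fin n × Fin n) (Fin n × Fin n) A) :
    Matrix.trace (Z * flipTraceFst T) = Matrix.trace (flipTraceSnd (leg2 Z * T)) := by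
  simp only [Matrix.trace, Matrix.diag_apply, flipTraceFst, flipTraceSnd, leg2, Matrix.mul_apply,
    Fintype.sum_prod_type, ite_mul, zero_mul, Finset.sum_ite_irrel, Finset.sum_const_zero,
    Finset.sum_ite_eq, Finset.mem_univ, if_true, Finset.mul_sum]
  exact (Finset.sum_congr rfl fun _ _ => Finset.sum_comm).trans Finset.sum_comm

end FlipTrace

section RLL

variable {n : ℕ} {A : Type*} [Semiring A]

/-- The relation `R L₁ M₂ = M₂ L₁ R` between two generator matrices. -/
def RLLRelation (R : Matrix (Fin n × Fin n) (Fin n × Fin n) A) (L M : Matrix (Fin n) (Fin n) A) :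
    Prop :=
  R * leg1 L * leg2 M = leg2 M * leg1 L * R

variable {R : Matrix (Fin n × Fin n) (Fin n × Fin n) A}

theorem RLLRelation.semiconjBy {L M : Matrix (Fin n) (Fin n) A} (h : RLLRelation R L M) :
    SemiconjBy (leg2 M) (leg1 L * R) (R * leg1 L) :=
  (mul_assoc _ _ _).symm.trans h.symm

theorem RLLRelation.semiconjBy_inv {L : Matrix (Fin n) (Fin n) A}
    {M : (Matrix (Fin n) (Fin n) A)ˣ} (h : RLLRelation R L M.val) :
    SemiconjBy (leg2 M⁻¹.val) (R * leg1 L) (leg1 L * R) :=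
  SemiconjBy.units_inv_symm_left (a := Units.map (leg2Hom (n := n) (A := A)) M) h.semiconjBy

theorem RLLRelation.commute_mul_inv_pow {L M : Matrix (Fin n) (Fin n) A}
    {N : (Matrix (Fin n) (Fin n) A)ˣ} (hM : RLLRelation R L M) (hN : RLLRelation R L N.val)
    (m : ℕ) : Commute (leg2 ((M * N⁻¹.val) ^ m)) (R * leg1 L) := by
  have h : Commute (leg2Hom (M * N⁻¹.val)) (R * leg1 L) := by
    rw [map_mul]
    exact hM.semiconjBy.mul_left hN.semiconjBy_inv
  change Commute (leg2Hom ((M * N⁻¹.val) ^ m)) _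
  rw [map_pow]
  exact h.pow_left m

theorem smul_trace_mul_conj {K : Type*} [CommSemiring K] [Algebra K A] {c : K}
    {D E X : Matrix (Fin n) (Fin n) A} {L : (Matrix (Fin n) (Fin n) A)ˣ}
    (hD : ∀ i j x, Commute (D i j) x) (hE : ∀ i j x, Commute (E i j) x)
    (hDR : flipTraceFst (leg1 D * R) = c • 1) (hER : flipTraceSnd (leg2 E * R) = c • 1)
    (hL : RLLRelation R L.val L.val) (hX : Commute (leg2 X) (R * leg1 L.val)) :
    c • Matrix.trace (E * (L⁻¹.val * X * L.val)) = c • Matrix.trace (D * X) := by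
  have hDX (Y : Matrix (Fin n) (Fin n) A) : leg1 D * leg2 Y = leg2 Y * leg1 D :=
    commute_leg1_leg2 fun i j _ _ => hD i j _
  have hEL : leg1 L.val * leg2 E = leg2 E * leg1 L.val :=
    commute_leg1_leg2 fun _ _ k l => (hE k l _).symm
  have hXL : flipTraceFst (leg1 D * (R * leg1 L.val * leg2 X)) = c • (X * L.val) := by
    rw [← hX.eq, ← mul_assoc, hDX, mul_assoc, ← mul_assoc (leg1 D), ← mul_assoc,
      flipTraceFst_leg2_mul_mul_leg1, hDR, mul_smul_comm, smul_mul_assoc, mul_one]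
  have hDEL : leg2 (E * L⁻¹.val) * (leg1 D * (R * leg1 L.val * leg2 X)) =
      leg1 (D * L.val) * (leg2 E * R) * leg2 (L⁻¹.val * X) := by
    calc leg2 (E * L⁻¹.val) * (leg1 D * (R * leg1 L.val * leg2 X))
        = leg1 D * leg2 E * (leg2 L⁻¹.val * (R * leg1 L.val)) * leg2 X := by
          rw [← mul_assoc, ← hDX, leg2_mul]; simp only [mul_assoc]
      _ = leg1 D * (leg2 E * leg1 L.val) * R * leg2 L⁻¹.val * leg2 X := by
          rw [hL.semiconjBy_inv.eq]; simp only [mul_assoc]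
      _ = leg1 (D * L.val) * (leg2 E * R) * leg2 (L⁻¹.val * X) := by
          rw [← hEL, leg1_mul, leg2_mul]; simp only [mul_assoc]
  calc c • Matrix.trace (E * (L⁻¹.val * X * L.val))
      = Matrix.trace (E * L⁻¹.val * flipTraceFst (leg1 D * (R * leg1 L.val * leg2 X))) := by
        rw [hXL, mul_smul_comm, Matrix.trace_smul]; simp only [mul_assoc]
    _ = Matrix.trace (flipTraceSnd (leg1 (D * L.val) * (leg2 E * R) * leg2 (L⁻¹.val * X))) := by
        rw [trace_mul_flipTraceFst, hDEL]
    _ = c • Matrix.trace (D * X) := by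
        rw [flipTraceSnd_leg1_mul_mul_leg2, hER, mul_smul_comm, smul_mul_assoc, mul_one,
          Matrix.trace_smul, mul_assoc, Units.mul_inv_cancel_left]

end RLL

section RMatrix

/-- The `R`-matrix with entries in a `ℂ`-algebra `A`; `RcGL` is the case of the free algebra. -/
noncomputable def RmatOver (q : ℂ) (n : ℕ) (A : Type*) [Semiring A] [Algebra ℂ A] :
    Matrix (Fin n × Fin n) (Fin n × Fin n) A :=
  (Rmat q n).map (algebraMap ℂ A)

/-- The coefficient of `e_{ij} ⊗ e_{ji}` in the `R`-matrix, including the case `i = j`. -/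
def flipCoeff {K : Type*} [Field K] (q : K) {n : ℕ} (i j : Fin n) : K :=
  if i = j then q else if i < j then q - q⁻¹ else 0

theorem Rmat_flip_left (q : ℂ) {n : ℕ} (a b c : Fin n) :
    Rmat q n (a, c) (b, a) = if c = b then flipCoeff q a c else 0 := by
  unfold Rmat flipCoeff
  grind

theorem Rmat_flip_right (q : ℂ) {n : ℕ} (a b d : Fin n) :
    Rmat q n (a, b) (b, d) = if a = d then flipCoeff q a b else 0 := by
  unfold Rmat flipCoeff
  grind

theorem sum_zpow_mul_flipCoeff {K : Type*} [Field K] {q : K} (hq : q ≠ 0) {n : ℕ} (c : Fin n) :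
    ∑ a : Fin n, q ^ ((n : ℤ) - 1 - 2 * (a : ℤ)) * flipCoeff q a c = q ^ n := by
  let g (a : ℕ) : K := if a ≤ c then q ^ ((n : ℤ) - 2 * a) else 0
  have telescope (a : Fin n) :
      q ^ ((n : ℤ) - 1 - 2 * (a : ℤ)) * flipCoeff q a c = g a - g (a + 1) := by
    have h_mul : q ^ ((n : ℤ) - 1 - 2 * (a : ℤ)) * q = q ^ ((n : ℤ) - 2 * a) := by
      rw [← zpow_add_one₀ hq]; congr 1; ring
    have h_div : q ^ ((n : ℤ) - 1 - 2 * (a : ℤ)) * q⁻¹ = q ^ ((n : ℤ) - 2 * (a + 1 : ℕ)) := by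
      rw [← zpow_sub_one₀ hq]; congr 1; push_cast; ring
    rcases lt_trichotomy a c with h | rfl | h
    · have h_succ : (a : ℕ) + 1 ≤ c := h
      simp only [g, flipCoeff, if_neg h.ne, if_pos h, if_pos h_succ,
        if_pos (Nat.le_of_succ_le h_succ), mul_sub, h_mul, h_div]
    · simp [g, flipCoeff, h_mul]
    · have h_not_le : ¬ (a : ℕ) ≤ c := not_le.mpr h
      simp [g, flipCoeff, h.ne', h.not_gt, h_not_le, mt Nat.le_of_succ_le h_not_le]
  rw [Finset.sum_congr rfl fun a _ => telescope a,
    Fin.sum_univ_eq_sum_range (fun a => g a - g (a + 1)), Finset.sum_range_sub']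
  simp [g]

theorem sum_zpow_neg_mul_flipCoeff {K : Type*} [Field K] {q : K} (hq : q ≠ 0) {n : ℕ}
    (a : Fin n) :
    ∑ b : Fin n, q ^ (-((n : ℤ) - 1 - 2 * (b : ℤ))) * flipCoeff q a b = q ^ n := by
  rw [← sum_zpow_mul_flipCoeff hq a.rev, ← Equiv.sum_comp Fin.revPerm]
  refine Finset.sum_congr rfl fun b _ => ?_
  have h_exp : -((n : ℤ) - 1 - 2 * (b.rev : ℕ)) = (n : ℤ) - 1 - 2 * (b : ℕ) := by
    rw [Fin.val_rev]; omega
  have h_coeff : flipCoeff q a b.rev = flipCoeff q b a.rev := by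
    simp only [flipCoeff, eq_comm (a := a), Fin.rev_eq_iff, Fin.lt_rev_iff]
  rw [Fin.revPerm_apply, h_exp, h_coeff]

variable {q : ℂ} {n : ℕ} {A : Type*} [Ring A] [Algebra ℂ A]

theorem flipTraceFst_Dmat_mul_RmatOver (hq : q ≠ 0) :
    flipTraceFst (leg1 (Dmat q n A) * RmatOver q n A) = q ^ n • 1 := by
  ext c b
  simp only [flipTraceFst, Dmat, RmatOver, leg1_diagonal, Matrix.diagonal_mul, Matrix.map_apply,
    ← map_mul, ← map_sum, Rmat_flip_left]
  by_cases h : c = b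
  · subst h
    simp only [if_true, sum_zpow_mul_flipCoeff hq, Matrix.smul_apply, Matrix.one_apply_eq,
      Algebra.algebraMap_eq_smul_one]
  · simp [h]

theorem flipTraceSnd_Dmatinv_mul_RmatOver (hq : q ≠ 0) :
    flipTraceSnd (leg2 (Dmatinv q n A) * RmatOver q n A) = q ^ n • 1 := by
  ext a d
  simp only [flipTraceSnd, Dmatinv, RmatOver, leg2_diagonal, Matrix.diagonal_mul, Matrix.map_apply,
    ← map_mul, ← map_sum, Rmat_flip_right]
  by_cases h : a = d
  · subst h
    simp only [if_true, sum_zpow_neg_mul_flipCoeff hq, Matrix.smul_apply, Matrix.one_apply_eq,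
      Algebra.algebraMap_eq_smul_one]
  · simp [h]

theorem trace_Dmatinv_mul_conj (hq : q ≠ 0) {L : (Matrix (Fin n) (Fin n) A)ˣ}
    {X : Matrix (Fin n) (Fin n) A} (hL : RLLRelation (RmatOver q n A) L.val L.val)
    (hX : Commute (leg2 X) (RmatOver q n A * leg1 L.val)) :
    Matrix.trace (Dmatinv q n A * (L⁻¹.val * X * L.val)) = Matrix.trace (Dmat q n A * X) :=
  smul_right_injective A (pow_ne_zero n hq) <|
    smul_trace_mul_conj (commute_diagonal_algebraMap_apply _) (commute_diagonal_algebraMap_apply _)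
      (flipTraceFst_Dmat_mul_RmatOver hq) (flipTraceSnd_Dmatinv_mul_RmatOver hq) hL hX

end RMatrix

theorem rllRelation_LM {q : ℂ} {n : ℕ} {p p' : Bool}
    (h : ∀ v w, relGL q n ((RcGL q n * leg1 (gl n p) * leg2 (gl n p')) v w)
      ((leg2 (gl n p') * leg1 (gl n p) * RcGL q n) v w)) :
    RLLRelation (RmatOver q n (UqGL q n)) (LM q n p) (LM q n p') := by
  let φ := RingQuot.mkAlgHom ℂ (relGL q n)
  have hR : RmatOver q n (UqGL q n) = (RcGL q n).map (φ : _ →+* UqGL q n) := by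
    ext v w
    exact (φ.commutes _).symm
  have hL (s) : LM q n s = (Matrix.of (gl n s)).map (φ : _ →+* UqGL q n) := rfl
  rw [RLLRelation, hR, hL, hL, leg1_map, leg2_map]
  simp only [← Matrix.map_mul]
  ext v w
  exact RingQuot.mkAlgHom_rel ℂ (h v w)

theorem stmt_15_general {n : ℕ} {q : ℂ} {A : Type*} [Ring A] [Algebra ℂ A] (hq : q ≠ 0)
    (L M : (Matrix (Fin n) (Fin n) A)ˣ) (hLL : RLLRelation (RmatOver q n A) L.val L.val)
    (hLM : RLLRelation (RmatOver q n A) L.val M.val) (m : ℕ) :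
    Matrix.trace (Dmatinv q n A * (L⁻¹.val * M.val) ^ m) =
        Matrix.trace (Dmat q n A * (M.val * L⁻¹.val) ^ m) ∧
      Matrix.trace (Dmatinv q n A * (M⁻¹.val * L.val) ^ m) =
        Matrix.trace (Dmat q n A * (L.val * M⁻¹.val) ^ m) := by
  have hM_conj : L⁻¹.val * M.val = L⁻¹.val * (M.val * L⁻¹.val) * L.val := by
    rw [mul_assoc, Units.inv_mul_cancel_right]
  have hM_inv_conj : M⁻¹.val * L.val = L⁻¹.val * (L.val * M⁻¹.val) * L.val := by
    rw [Units.inv_mul_cancel_left]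
  constructor
  · rw [hM_conj, Units.conj_pow',
      trace_Dmatinv_mul_conj hq hLL (hLM.commute_mul_inv_pow hLL m)]
  · rw [hM_inv_conj, Units.conj_pow',
      trace_Dmatinv_mul_conj hq hLL (hLL.commute_mul_inv_pow hLM m)]

/-- In `U_q(gl_n)`, for every `m ≥ 0`:
`tr(D⁻¹((L⁺)⁻¹L⁻)^m) = tr(D(L⁻(L⁺)⁻¹)^m)` and
`tr(D⁻¹((L⁻)⁻¹L⁺)^m) = tr(D(L⁺(L⁻)⁻¹)^m)`. -/
theorem stmt_15 (n : ℕ) (hn : 1 ≤ n) (q : ℂ) (hq0 : q ≠ 0)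
    (hq : ∀ k : ℕ, k ≠ 0 → q ^ k ≠ 1)
    (Lpinv Lminv : Matrix (Fin n) (Fin n) (UqGL q n))
    (hLp1 : LM q n true * Lpinv = 1) (hLp2 : Lpinv * LM q n true = 1)
    (hLm1 : LM q n false * Lminv = 1) (hLm2 : Lminv * LM q n false = 1)
    (m : ℕ) :
    Matrix.trace (Dmatinv q n (UqGL q n) * (Lpinv * LM q n false) ^ m) =
        Matrix.trace (Dmat q n (UqGL q n) * (LM q n false * Lpinv) ^ m) ∧
      Matrix.trace (Dmatinv q n (UqGL q n) * (Lminv * LM q n true) ^ m) =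
        Matrix.trace (Dmat q n (UqGL q n) * (LM q n true * Lminv) ^ m) :=
  stmt_15_general hq0 ⟨LM q n true, Lpinv, hLp1, hLp2⟩ ⟨LM q n false, Lminv, hLm1, hLm2⟩
    (rllRelation_LM (relGL.rll true)) (rllRelation_LM relGL.rll_pm) m
end

section
/- Let ξ be the highest weight vector of the module L_q(λ). Then for every complex number u, ∑_{σ∈S_n} (−q)^{−l(σ)} · (l⁺_{σ(1)1} − uq^{2n−2}·l⁻_{σ(1)1}) · (l⁺_{σ(2)2} − uq^{2n−4}·l⁻_{σ(2)2}) ⋯ (l⁺_{σ(n)n} − u·l⁻_{σ(n)n}) · ξ = ∏_{i=1}^n (q^{−λ_i} − q^{λ_i + 2n − 2i}·u) · ξ, where l(σ) is the length of the permutation σ. -/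
open Matrix

/-!
Call a matrix `T` over an algebra triangular at `ξ` if its entries above the diagonal kill `ξ` and
`ξ` is an eigenvector of its diagonal entries. A permutation `σ ≠ 1` has a last non-fixed point `i`,
and there `σ i < i`. So in `T_{σ(1)1} ⋯ T_{σ(n)n} ξ` the factors to the right of the `i`-th scale
`ξ` and the `i`-th kills it: only `σ = 1` contributes, and it gives the product of the diagonal
eigenvalues. The matrix `T_{ij} = l⁺_{ij} - a_j l⁻_{ij}` is triangular at a highest weight vector
because `l⁻_{ij} = 0` for `i < j` and `l⁺_{ii}` is inverse to `l⁻_{ii}`.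
-/

theorem exists_apply_lt_of_injective_of_ne_id {α : Type*} [LinearOrder α] [WellFoundedGT α]
    {f : α → α} (hf : Function.Injective f) (hne : f ≠ id) :
    ∃ i, f i < i ∧ ∀ j, i < j → f j = j := by
  obtain ⟨i, hi, hmax⟩ := wellFounded_gt.has_min {i | f i ≠ i} (Function.ne_iff.mp hne)
  have hfix : ∀ j, i < j → f j = j := fun j hij => not_not.mp fun hj => hmax j hj hij
  exact ⟨i, hi.lt_or_gt.resolve_right fun h => hi (hf (hfix _ h)), hfix⟩

theorem invCount_one (m : ℕ) : invCount (1 : Equiv.Perm (Fin m)) = 0 := by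
  rw [invCount, Finset.card_eq_zero, Finset.filter_eq_empty_iff]
  exact fun _ _ h => lt_asymm h.1 h.2

section TriangularAction

variable {R A M : Type*} [CommSemiring R] [Semiring A] [Algebra R A] [AddCommMonoid M] [Module A M]
  {n : ℕ} {ξ : M}

theorem smul_algebraMap_smul_comm (a : A) (r : R) (x : M) :
    a • algebraMap R A r • x = algebraMap R A r • a • x := by
  rw [← mul_smul, ← Algebra.commutes, mul_smul]

theorem smul_eq_algebraMap_inv_smul_of_mul_eq_one {a b : A} (hab : a * b = 1) {μ : Rˣ}
    (hb : b • ξ = algebraMap R A μ • ξ) : a • ξ = algebraMap R A ↑μ⁻¹ • ξ :=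
  calc
    a • ξ = algebraMap R A ↑μ⁻¹ • algebraMap R A μ • a • ξ := by
      rw [← mul_smul, ← map_mul, Units.inv_mul, map_one, one_smul]
    _ = algebraMap R A ↑μ⁻¹ • ξ := by
      rw [← smul_algebraMap_smul_comm a μ.val, ← hb, ← mul_smul a b, hab, one_smul]

theorem prod_ofFn_smul_eq_algebraMap_prod_smul {f : Fin n → A} {c : Fin n → R}
    (hf : ∀ i, f i • ξ = algebraMap R A (c i) • ξ) :
    (List.ofFn f).prod • ξ = algebraMap R A (∏ i, c i) • ξ := by
  induction n with
  | zero => simp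
  | succ n ih =>
    rw [List.ofFn_succ, List.prod_cons, mul_smul, ih fun i => hf i.succ,
      smul_algebraMap_smul_comm, hf 0, ← mul_smul, ← map_mul, mul_comm, Fin.prod_univ_succ]

theorem prod_ofFn_smul_eq_zero {f : Fin n → A} {c : Fin n → R} {i : Fin n} (hi : f i • ξ = 0)
    (hf : ∀ j, i < j → f j • ξ = algebraMap R A (c j) • ξ) :
    (List.ofFn f).prod • ξ = 0 := by
  induction n with
  | zero => exact i.elim0
  | succ n ih =>
    rw [List.ofFn_succ, List.prod_cons, mul_smul]
    cases i using Fin.cases with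
    | zero =>
      rw [prod_ofFn_smul_eq_algebraMap_prod_smul fun j => hf j.succ j.succ_pos,
        smul_algebraMap_smul_comm, hi, smul_zero]
    | succ i =>
      rw [ih hi fun j hij => hf j.succ (Fin.succ_lt_succ_iff.mpr hij), smul_zero]

theorem sum_perm_prod_smul_of_triangular {T : Matrix (Fin n) (Fin n) A} {c : Fin n → R}
    (hupper : ∀ i j, i < j → T i j • ξ = 0)
    (hdiag : ∀ i, T i i • ξ = algebraMap R A (c i) • ξ) (w : Equiv.Perm (Fin n) → R) :
    (∑ σ, w σ • (List.ofFn fun i => T (σ i) i).prod) • ξ =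
      algebraMap R A (w 1 * ∏ i, c i) • ξ := by
  have hvanish : ∀ σ : Equiv.Perm (Fin n), σ ≠ 1 → (List.ofFn fun i => T (σ i) i).prod • ξ = 0 := by
    intro σ hσ
    obtain ⟨i, hi, hfix⟩ := exists_apply_lt_of_injective_of_ne_id σ.injective
      fun h => hσ (DFunLike.coe_injective h)
    refine prod_ofFn_smul_eq_zero (c := c) (hupper _ _ hi) fun j hij => ?_
    rw [hfix j hij, hdiag]
  rw [Finset.sum_smul, Fintype.sum_eq_single 1 fun σ hσ => by
    rw [Algebra.smul_def, mul_smul, hvanish σ hσ, smul_zero]]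
  rw [Algebra.smul_def, mul_smul, map_mul, mul_smul]
  exact congrArg _ (prod_ofFn_smul_eq_algebraMap_prod_smul hdiag)

end TriangularAction

section HighestWeight

variable {q : ℂ} {n : ℕ}

theorem lG_false_eq_zero_of_lt {i j : Fin n} (hij : i < j) : lG q n false i j = 0 := by
  rw [lG, RingQuot.mkAlgHom_rel ℂ (relGL.tri_minus hij), map_zero]

theorem lG_true_mul_lG_false_self (i : Fin n) : lG q n true i i * lG q n false i i = 1 := by
  rw [lG, lG, ← map_mul, RingQuot.mkAlgHom_rel ℂ (relGL.diag_pm i), map_one]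

variable {V : Type*} [AddCommGroup V] [Module (UqGL q n) V] {ξ : V}

theorem lG_true_sub_mul_lG_false_smul_eq_zero {i j : Fin n} (hij : i < j)
    (hξ : lG q n true i j • ξ = 0) (a : UqGL q n) :
    (lG q n true i j - a * lG q n false i j) • ξ = 0 := by
  rw [lG_false_eq_zero_of_lt hij, mul_zero, sub_zero, hξ]

theorem lG_true_sub_mul_lG_false_self_smul {i : Fin n} {μ : ℂˣ}
    (hξ : lG q n false i i • ξ = algebraMap ℂ (UqGL q n) μ • ξ) (a : ℂ) :
    (lG q n true i i - algebraMap ℂ (UqGL q n) a * lG q n false i i) • ξ =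
      algebraMap ℂ (UqGL q n) (↑μ⁻¹ - a * μ) • ξ := by
  rw [sub_smul, mul_smul, hξ,
    smul_eq_algebraMap_inv_smul_of_mul_eq_one (lG_true_mul_lG_false_self i) hξ,
    ← mul_smul, ← map_mul, ← sub_smul, ← map_sub]

end HighestWeight

theorem stmt_18_general (n : ℕ) (q : ℂˣ) (μ : Fin n → ℂˣ)
    (V : Type*) [AddCommGroup V] [Module (UqGL q n) V] (ξ : V)
    (hupper : ∀ i j : Fin n, i < j → lG q n true i j • ξ = 0)
    (hweight : ∀ i : Fin n, lG q n false i i • ξ = algebraMap ℂ (UqGL q n) (μ i) • ξ)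
    (u : ℂ) :
    (∑ σ : Equiv.Perm (Fin n),
        ((-q : ℂ) ^ (-(invCount σ : ℤ))) •
          (List.ofFn fun i : Fin n =>
            lG q n true (σ i) i -
              algebraMap ℂ (UqGL q n) (u * (q : ℂ) ^ (2 * ((n : ℤ) - 1 - (i : ℤ)))) *
                lG q n false (σ i) i).prod) • ξ =
      algebraMap ℂ (UqGL q n)
        (∏ i : Fin n, (↑(μ i)⁻¹ - ↑(μ i * q ^ (2 * (n : ℤ) - 2 - 2 * (i : ℤ))) * u)) • ξ := by
  let a (j : Fin n) : ℂ := u * (q : ℂ) ^ (2 * ((n : ℤ) - 1 - (j : ℤ)))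
  let T : Matrix (Fin n) (Fin n) (UqGL q n) :=
    fun i j => lG q n true i j - algebraMap ℂ (UqGL q n) (a j) * lG q n false i j
  have hT := sum_perm_prod_smul_of_triangular (T := T)
    (fun i j hij => lG_true_sub_mul_lG_false_smul_eq_zero hij (hupper i j hij) _)
    (fun i => lG_true_sub_mul_lG_false_self_smul (hweight i) (a i))
    fun σ => (-q : ℂ) ^ (-(invCount σ : ℤ))
  have heigenvalue (i : Fin n) :
      (↑(μ i * q ^ (2 * (n : ℤ) - 2 - 2 * (i : ℤ))) : ℂ) * u = a i * μ i := by
    simp only [a, Units.val_mul, Units.val_zpow_eq_zpow_val]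
    ring_nf
  simp_rw [heigenvalue]
  rwa [invCount_one, Nat.cast_zero, neg_zero, zpow_zero, one_mul] at hT

/-- Evaluation of the (evaluated) quantum determinant
`∑_σ (−q)^{−l(σ)} (l⁺_{σ(1)1} − uq^{2n−2}l⁻_{σ(1)1})⋯(l⁺_{σ(n)n} − u l⁻_{σ(n)n})`
on the highest weight vector `ξ` of `L_q(λ)`:
the eigenvalue is `∏_{i=1}^n (q^{−λ_i} − q^{λ_i+2n−2i}u)`. -/
theorem stmt_18 (n : ℕ) (hn : 1 ≤ n) (q : ℂ) (hq0 : q ≠ 0)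
    (hq : ∀ k : ℕ, k ≠ 0 → q ^ k ≠ 1)
    (lam : Fin n → ℤ)
    (V : Type*) [AddCommGroup V] [Module (UqGL q n) V]
    (hirr : IsSimpleModule (UqGL q n) V)
    (ξ : V) (hξ : ξ ≠ 0)
    (hhw1 : ∀ i j : Fin n, i < j → lG q n true i j • ξ = 0)
    (hhw2 : ∀ i : Fin n, lG q n false i i • ξ = algebraMap ℂ (UqGL q n) (q ^ (lam i)) • ξ)
    (u : ℂ) :
    (∑ σ : Equiv.Perm (Fin n),
        ((-q) ^ (-(invCount σ : ℤ))) •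
          (List.ofFn fun i : Fin n =>
            lG q n true (σ i) i -
              algebraMap ℂ (UqGL q n) (u * q ^ (2 * ((n : ℤ) - 1 - (i : ℤ)))) *
                lG q n false (σ i) i).prod) • ξ =
      algebraMap ℂ (UqGL q n)
        (∏ i : Fin n, (q ^ (-(lam i)) - q ^ (lam i + 2 * (n : ℤ) - 2 - 2 * (i : ℤ)) * u)) • ξ := by
  lift q to ℂˣ using IsUnit.mk0 q hq0
  simpa only [← _root_.zpow_neg, ← _root_.zpow_add, ← add_sub_assoc, Units.val_zpow_eq_zpow_val]
    using stmt_18_general n q (fun i => q ^ lam i) V ξ hhw1 (by simpa using hhw2) u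
end
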